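/- arXiv:2510.17344 — 8 statements merged into one kernel-verified Lean document; each statement's English description precedes it below -/
import Mathlib

section
/- Let H be a graph on n vertices and let S, T ⊆ V(H) with |S| = |T| = k. If T is reachable from S by some transformation sequence in the discovery token sliding model, then T is reachable from S by a transformation sequence of at most k·n token slides. -/
namespace TokenDiscovery

variable {V : Type*} {α : Type*}

/-- One token slide in the discovery token sliding model: exactly one token
moves from its current vertex to an adjacent vertex (several tokens may share
a vertex during the transformation).  A configuration assigns to every token
(indexed by `α`) its current vertex. -/
def Step (G : SimpleGraph V) (c c' : α → V) : Prop :=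
  ∃ i : α, G.Adj (c i) (c' i) ∧ ∀ j : α, j ≠ i → c' j = c j

/-- `T` is reachable from the initial configuration `c₀` within at most `b`
token slides in the discovery token sliding model: some transformation
sequence of at most `b` token slides moves the tokens from `c₀` to a
configuration with exactly one token on each vertex of `T`. -/
def Reachable (G : SimpleGraph V) (c₀ : α → V) (T : Set V) (b : ℕ) : Prop :=
  ∃ (m : ℕ) (f : ℕ → α → V), m ≤ b ∧ f 0 = c₀ ∧
    (∀ i : ℕ, i < m → Step G (f i) (f (i + 1))) ∧
    Function.Injective (f m) ∧ Set.range (f m) = T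

/-- `T` is reachable from `c₀` within at most `b` token slides in the
(plain) token sliding model: at every moment the tokens occupy pairwise
distinct vertices, and each token slide moves one token along an edge
(necessarily to an unoccupied vertex, since configurations stay injective). -/
def SlidingReachable (G : SimpleGraph V) (c₀ : α → V) (T : Set V) (b : ℕ) : Prop :=
  ∃ (m : ℕ) (f : ℕ → α → V), m ≤ b ∧ f 0 = c₀ ∧
    (∀ i : ℕ, i ≤ m → Function.Injective (f i)) ∧
    (∀ i : ℕ, i < m → Step G (f i) (f (i + 1))) ∧
    Set.range (f m) = T

end TokenDiscovery

/-- There is a transformation sequence of exactly `m` slides from `c` to `d`. -/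
def SlidePath {V α : Type*} (G : SimpleGraph V) (c d : α → V) (m : ℕ) : Prop :=
  ∃ f : ℕ → α → V, f 0 = c ∧ (∀ i : ℕ, i < m → TokenDiscovery.Step G (f i) (f (i + 1))) ∧ f m = d

theorem SlidePath.append {V α : Type*} {G : SimpleGraph V} {c d e : α → V} {m l : ℕ}
    (h₁ : SlidePath G c d m) (h₂ : SlidePath G d e l) : SlidePath G c e (m + l) := by
  obtain ⟨f, f0, fs, fm⟩ := h₁
  obtain ⟨g, g0, gs, gm⟩ := h₂
  refine ⟨fun i => if i ≤ m then f i else g (i - m), by simp [f0], ?_, ?_⟩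
  · intro i hi
    rcases lt_trichotomy i m with h | h | h
    · have h1 : i + 1 ≤ m := h
      simpa [h.le, h1] using fs i h
    · subst h
      have := gs 0 (by omega)
      simpa [fm, ← g0] using this
    · have h1 : ¬ i ≤ m := by omega
      have h2 : ¬ i + 1 ≤ m := by omega
      have h3 : i + 1 - m = i - m + 1 := by omega
      simpa [h1, h2, h3] using gs (i - m) (by omega)
  · by_cases h : l = 0
    · subst h
      simp [fm, ← gm, g0]
    · have h1 : ¬ m + l ≤ m := by omega
      simp [h, gm]

theorem SlidePath.of_walk {V α : Type*} [DecidableEq α] {G : SimpleGraph V} (i : α) {u v : V}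
    (w : G.Walk u v) : ∀ c : α → V, c i = u → SlidePath G c (Function.update c i v) w.length := by
  induction w with
  | nil =>
    rintro c rfl
    exact ⟨fun _ => c, rfl, by simp, by simp⟩
  | @cons u v' w' hadj p ih =>
    rintro c rfl
    have h1 : SlidePath G c (Function.update c i v') 1 := by
      refine ⟨fun t => if t = 0 then c else Function.update c i v', by simp, ?_, by simp⟩
      intro t ht
      obtain rfl : t = 0 := by omega
      exact ⟨i, by simpa using hadj, fun j hj => by simp [hj]⟩
    have h2 := ih (Function.update c i v') (by simp)
    have h3 := h1.append h2
    rw [Function.update_idem] at h3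
    rw [SimpleGraph.Walk.length_cons, add_comm]
    exact h3

theorem SlidePath.reachable {V α : Type*} {G : SimpleGraph V} {c d : α → V} {m : ℕ}
    (h : SlidePath G c d m) (i : α) : G.Reachable (c i) (d i) := by
  obtain ⟨f, rfl, fs, rfl⟩ := h
  induction m with
  | zero => exact SimpleGraph.Reachable.refl _
  | succ m ih =>
    refine (ih fun t ht => fs t (by omega)).trans ?_
    obtain ⟨j, hj, hne⟩ := fs m (by omega)
    by_cases hij : i = j
    · subst hij
      exact hj.reachable
    · rw [hne i hij]

theorem SlidePath.exists_short {V α : Type*} [Fintype V] [DecidableEq α] {G : SimpleGraph V}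
    {c d : α → V} (h : ∀ i, G.Reachable (c i) (d i)) (A : Finset α) :
    ∃ m ≤ A.card * Fintype.card V, SlidePath G c (fun i => if i ∈ A then d i else c i) m := by
  classical
  induction A using Finset.induction_on with
  | empty => exact ⟨0, by simp, fun _ => c, rfl, by simp, by simp⟩
  | insert a A ha ih =>
    obtain ⟨m, hm, hp⟩ := ih
    obtain ⟨w, hw⟩ := (h a).exists_isPath
    have hl := hw.length_lt
    refine ⟨m + w.length, ?_, ?_⟩
    · rw [Finset.card_insert_of_notMem ha, add_mul, one_mul]
      omega
    · convert hp.append (SlidePath.of_walk a w _ (by simp [ha])) using 1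
      funext i
      by_cases hi : i = a
      · subst hi; simp
      · simp [hi]

/-- If `T` is reachable from `S` by some transformation sequence in the
discovery token sliding model, then it is reachable by a transformation
sequence of at most `k · n` token slides, where `k = |S| = |T|` and `n` is the
number of vertices of `H`. -/
theorem discovery_reachable_within_kn {V : Type*} [Fintype V] (H : SimpleGraph V)
    (n k : ℕ) (hn : Fintype.card V = n)
    (S T : Finset V) (hS : S.card = k) (hT : T.card = k)
    (h : ∃ b : ℕ, TokenDiscovery.Reachable H (fun a : {x // x ∈ S} => (a : V)) (↑T) b) :
    TokenDiscovery.Reachable H (fun a : {x // x ∈ S} => (a : V)) (↑T) (k * n) := by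
  classical
  obtain ⟨b, m, f, -, f0, fs, finj, frange⟩ := h
  have hp : SlidePath H (fun a : {x // x ∈ S} => (a : V)) (f m) m := ⟨f, f0, fs, rfl⟩
  obtain ⟨l, hl, g, g0, gs, gl⟩ := SlidePath.exists_short hp.reachable Finset.univ
  have gl' : g l = f m := by simpa using gl
  refine ⟨l, g, ?_, g0, gs, gl' ▸ finj, gl' ▸ frange⟩
  simpa [hS, hn] using hl
end

section
/- Let H be a graph, let S, T ⊆ V(H) with |S| = |T| = k, and let b ∈ ℕ. Then T is reachable from S within b token slides in the discovery token sliding model if and only if T is reachable from S within b token slides in the token sliding model, in which at every moment the tokens occupy pairwise distinct vertices and a token may only slide along an edge to an unoccupied vertex. -/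
namespace TokenDiscovery

/-- There is a walk of length `n` from `u` to `v`. -/
def Wlk {V : Type*} (G : SimpleGraph V) (u v : V) (n : ℕ) : Prop :=
  ∃ p : G.Walk u v, p.length = n

/-- A walk from a vertex in `O` to one outside `O` has an edge leaving `O`. -/
lemma exists_exit {V : Type*} {G : SimpleGraph V} (O : Set V) {u t : V} (p : G.Walk u t)
    (hu : u ∈ O) (ht : t ∉ O) :
    ∃ x y m n, Wlk G u x m ∧ G.Adj x y ∧ Wlk G y t n ∧ x ∈ O ∧ y ∉ O ∧ m + 1 + n = p.length := by
  induction p with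
  | nil => exact absurd hu ht
  | @cons u v t h p ih =>
    by_cases hv : v ∈ O
    · obtain ⟨x, y, m, n, ⟨q, hq⟩, hxy, hn, hx, hy, hl⟩ := ih hv ht
      refine ⟨x, y, m + 1, n, ⟨q.cons h, by simp [hq]⟩, hxy, hn, hx, hy, ?_⟩
      simp only [SimpleGraph.Walk.length_cons]
      omega
    · refine ⟨u, v, 0, p.length, ⟨.nil, rfl⟩, h, ⟨p, rfl⟩, hu, hv, ?_⟩
      simp only [SimpleGraph.Walk.length_cons]
      omega

lemma SlidingReachable.cons {V α : Type*} {G : SimpleGraph V} {c c' : α → V} {T : Set V} {b : ℕ}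
    (hc : Function.Injective c) (hs : Step G c c') (h : SlidingReachable G c' T b) :
    SlidingReachable G c T (b + 1) := by
  obtain ⟨m, f, hm, h0, hi, hst, hr⟩ := h
  refine ⟨m + 1, fun i => Nat.casesOn i c f, by omega, rfl, ?_, ?_, hr⟩
  · rintro (_ | i) h
    · exact hc
    · exact hi i (by omega)
  · rintro (_ | i) h
    · simpa [h0] using hs
    · exact hst i (by omega)

lemma sliding_of_walks {V α : Type*} [Fintype α] {G : SimpleGraph V} {T : Set V} (b : ℕ) :
    ∀ (c σ : α → V) (l : α → ℕ), Function.Injective c → Function.Injective σ →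
      Set.range σ = T → (∀ a, Wlk G (c a) (σ a) (l a)) → ∑ a, l a ≤ b →
      SlidingReachable G c T b := by
  classical
  induction b with
  | zero =>
    intro c σ l hc hσ hT hw hl
    have : c = σ := by
      funext a
      obtain ⟨p, hp⟩ := hw a
      have : l a = 0 := by
        have := Finset.single_le_sum (f := l) (fun _ _ => Nat.zero_le _) (Finset.mem_univ a)
        omega
      exact SimpleGraph.Walk.eq_of_length_eq_zero (hp.trans this)
    exact ⟨0, fun _ => c, le_rfl, rfl, fun _ _ => hc, by simp, by rw [this, hT]⟩
  | succ b ih =>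
    intro c σ l hc hσ hT hw hl
    by_cases h : ∀ a, σ a ∈ Set.range c
    · refine ⟨0, fun _ => c, by omega, rfl, fun _ _ => hc, by simp, ?_⟩
      rw [← hT]
      symm
      apply Set.eq_of_subset_of_ncard_le
      · rintro _ ⟨a, rfl⟩
        exact h a
      · rw [← Set.image_univ, ← Set.image_univ, Set.ncard_image_of_injective _ hc,
          Set.ncard_image_of_injective _ hσ]
      · exact Set.finite_range c
    · push Not at h
      obtain ⟨a, ha⟩ := h
      obtain ⟨p, hp⟩ := hw a
      obtain ⟨x, y, m, n, ⟨q, hq⟩, hxy, hn, ⟨a', rfl⟩, hy, hlen⟩ :=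
        exists_exit (Set.range c) p ⟨a, rfl⟩ ha
      have hstep : Step G c (Function.update c a' y) :=
        ⟨a', by simpa using hxy, fun j hj => by simp [hj]⟩
      have hc' : Function.Injective (Function.update c a' y) := by
        intro i j hij
        by_cases hi : i = a' <;> by_cases hj : j = a'
        · rw [hi, hj]
        · subst hi
          rw [Function.update_self, Function.update_of_ne hj] at hij
          exact absurd ⟨j, hij.symm⟩ hy
        · subst hj
          rw [Function.update_self, Function.update_of_ne hi] at hij
          exact absurd ⟨i, hij⟩ hy
        · rw [Function.update_of_ne hj, Function.update_of_ne hi] at hij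
          exact hc hij
      refine SlidingReachable.cons hc hstep ?_
      refine ih _ (σ ∘ Equiv.swap a a')
        (Function.update (Function.update l a (m + l a')) a' n) hc'
        (hσ.comp (Equiv.injective _)) ?_ ?_ ?_
      · rw [(Equiv.surjective _).range_comp, hT]
      · intro j
        by_cases hj : j = a'
        · subst hj
          simpa using hn
        · by_cases hja : j = a
          · subst hja
            obtain ⟨r, hr⟩ := hw a'
            simp only [Function.update_of_ne hj, Function.update_self, Function.comp,
              Equiv.swap_apply_left]
            exact ⟨q.append r, by simp [hq, hr]⟩
          · simp only [Function.update_of_ne hj, Function.update_of_ne hja, Function.comp,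
              Equiv.swap_apply_of_ne_of_ne hja hj]
            exact hw j
      · by_cases haa : a = a'
        · subst haa
          rw [Function.update_idem, Finset.sum_update_of_mem (Finset.mem_univ _)]
          have := Finset.sum_eq_add_sum_sdiff_singleton_of_mem (Finset.mem_univ a) l
          omega
        · have h1 := Finset.sum_eq_add_sum_sdiff_singleton_of_mem (Finset.mem_univ a') l
          have hm : a ∈ Finset.univ \ {a'} := by simp [haa]
          have h2 := Finset.sum_eq_add_sum_sdiff_singleton_of_mem hm l
          rw [Finset.sum_update_of_mem (Finset.mem_univ _), Finset.sum_update_of_mem hm]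
          omega

lemma walks_of_steps {V α : Type*} [Fintype α] {G : SimpleGraph V} (f : ℕ → α → V) (m : ℕ)
    (h : ∀ i : ℕ, i < m → Step G (f i) (f (i + 1))) :
    ∃ l : α → ℕ, (∀ a, Wlk G (f 0 a) (f m a) (l a)) ∧ ∑ a, l a ≤ m := by
  classical
  induction m with
  | zero => exact ⟨fun _ => 0, fun a => ⟨.nil, rfl⟩, by simp⟩
  | succ m ih =>
    obtain ⟨l, hw, hl⟩ := ih fun i hi => h i (by omega)
    obtain ⟨i, hi, hj⟩ := h m (by omega)
    refine ⟨Function.update l i (l i + 1), ?_, ?_⟩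
    · intro a
      obtain ⟨p, hp⟩ := hw a
      by_cases ha : a = i
      · subst ha
        exact ⟨p.concat hi, by simp [hp]⟩
      · rw [Function.update_of_ne ha, hj a ha]
        exact ⟨p, hp⟩
    · rw [Finset.sum_update_of_mem (Finset.mem_univ _)]
      have := Finset.sum_eq_add_sum_sdiff_singleton_of_mem (Finset.mem_univ i) l
      omega

end TokenDiscovery

/-- `T` is reachable from `S` within `b` token slides in the discovery token
sliding model if and only if it is reachable from `S` within `b` token slides
in the token sliding model (where at every moment the tokens occupy pairwise
distinct vertices and a token may only slide along an edge to an unoccupied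
vertex). -/
theorem discovery_reachable_iff_sliding_reachable {V : Type*} (H : SimpleGraph V)
    (S T : Finset V) (k b : ℕ) (hS : S.card = k) (hT : T.card = k) :
    TokenDiscovery.Reachable H (fun a : {x // x ∈ S} => (a : V)) (↑T) b ↔
      TokenDiscovery.SlidingReachable H (fun a : {x // x ∈ S} => (a : V)) (↑T) b := by
  constructor
  · rintro ⟨m, f, hm, h0, hst, hinj, hr⟩
    obtain ⟨l, hw, hl⟩ := TokenDiscovery.walks_of_steps f m hst
    rw [h0] at hw
    exact TokenDiscovery.sliding_of_walks b _ _ l Subtype.val_injective hinj hr hw (hl.trans hm)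
  · rintro ⟨m, f, hm, h0, hinj, hst, hr⟩
    exact ⟨m, f, hm, h0, hst, hinj m le_rfl, hr⟩
end

section
/- For the graph H of the stars construction obtained from a Multicolored Clique instance (G, κ), the modulator to stars number satisfies ms(H) ≤ 5·(κ choose 2) + κ; indeed, the set consisting of all green connector nodes, all gray edge block nodes, and all teal vertex block nodes is a modulator to stars of H. -/
namespace StarsConstruction

/-- Pre-nodes of the stars construction obtained from a Multicolored Clique
instance with `κ` color classes of `n` vertices each.  The vertex `x` of class
`i` is the pair `(i, x) : Fin κ × Fin n`, and its index is `ι(i, x) = x + 1`. -/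
inductive PreNode (κ n : ℕ) : Type
  /-- the teal vertex block node `b_i` -/
  | vblock (i : Fin κ)
  /-- the purple vertex root node of the star vertex-gadget for the vertex `(i, x)` -/
  | vroot (i : Fin κ) (x : Fin n)
  /-- the `p`-th leaf of the group for class `j` of the star vertex-gadget for `(i, x)` -/
  | vleaf (i : Fin κ) (x : Fin n) (j : Fin κ) (p : Fin n)
  /-- the gray edge block node `b_{i,j}` (for `i < j`) -/
  | eblock (i j : Fin κ)
  /-- the black edge root node of the star edge-gadget for the edge `(i,x)(j,y)` -/
  | eroot (i j : Fin κ) (x y : Fin n)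
  /-- the `p`-th leaf of the group for `(i, x)` (`side = false`) or `(j, y)`
  (`side = true`) of the star edge-gadget for the edge `(i,x)(j,y)` -/
  | eleaf (i j : Fin κ) (x y : Fin n) (side : Bool) (p : Fin n)
  /-- green connector node for the pair `{i, j}` (with `i < j`); `fromSecond`
  tells whether it is the connector from color `j` (rather than from color `i`),
  and `isIndex` whether it is the index (rather than the remainder) connector -/
  | conn (i j : Fin κ) (fromSecond : Bool) (isIndex : Bool)

variable {κ n : ℕ}

/-- The index (`isIndex = true`) or remainder (`isIndex = false`) connector
node from color `i` to the pair `{i, j}`. -/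
def connFor (i j : Fin κ) (isIndex : Bool) : PreNode κ n :=
  if i < j then PreNode.conn i j false isIndex else PreNode.conn j i true isIndex

variable (G : SimpleGraph (Fin κ × Fin n))

/-- The pre-nodes actually present in the stars construction for the
Multicolored Clique instance `G`. -/
def Valid : PreNode κ n → Prop
  | PreNode.vblock _ => True
  | PreNode.vroot _ _ => True
  | PreNode.vleaf i _ j _ => j ≠ i
  | PreNode.eblock i j => i < j
  | PreNode.eroot i j x y => i < j ∧ G.Adj (i, x) (j, y)
  | PreNode.eleaf i j x y _ _ => i < j ∧ G.Adj (i, x) (j, y)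
  | PreNode.conn i j _ _ => i < j

/-- Nodes of the stars construction. -/
abbrev Node := {w : PreNode κ n // Valid G w}

/-- The base adjacency relation of the stars construction (to be symmetrized).
The first `ι(i,x) = x + 1` leaves of a group go to the index connector and the
remaining `n - ι(i,x)` leaves go to the remainder connector. -/
def Rel : PreNode κ n → PreNode κ n → Prop := fun a b =>
  (∃ i x, a = PreNode.vroot i x ∧ b = PreNode.vblock i) ∨
  (∃ i x j p, a = PreNode.vleaf i x j p ∧ b = PreNode.vroot i x) ∨
  (∃ (i : Fin κ) (x : Fin n) (j : Fin κ) (p : Fin n), (p : ℕ) ≤ (x : ℕ) ∧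
      a = PreNode.vleaf i x j p ∧ b = connFor i j true) ∨
  (∃ (i : Fin κ) (x : Fin n) (j : Fin κ) (p : Fin n), (x : ℕ) < (p : ℕ) ∧
      a = PreNode.vleaf i x j p ∧ b = connFor i j false) ∨
  (∃ i j x y, a = PreNode.eroot i j x y ∧ b = PreNode.eblock i j) ∨
  (∃ i j x y s p, a = PreNode.eleaf i j x y s p ∧ b = PreNode.eroot i j x y) ∨
  (∃ (i j : Fin κ) (x y p : Fin n), (p : ℕ) ≤ (x : ℕ) ∧
      a = PreNode.eleaf i j x y false p ∧ b = connFor i j true) ∨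
  (∃ (i j : Fin κ) (x y p : Fin n), (x : ℕ) < (p : ℕ) ∧
      a = PreNode.eleaf i j x y false p ∧ b = connFor i j false) ∨
  (∃ (i j : Fin κ) (x y p : Fin n), (p : ℕ) ≤ (y : ℕ) ∧
      a = PreNode.eleaf i j x y true p ∧ b = connFor j i true) ∨
  (∃ (i j : Fin κ) (x y p : Fin n), (y : ℕ) < (p : ℕ) ∧
      a = PreNode.eleaf i j x y true p ∧ b = connFor j i false)

/-- The graph `H` of the stars construction. -/
def H : SimpleGraph (Node G) := SimpleGraph.fromRel (fun a b => Rel a.1 b.1)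

/-- The initial configuration: all leaves of all star vertex-gadgets. -/
def initialS : Set (Node G) := {w | ∃ i x j p, w.1 = PreNode.vleaf i x j p}

/-- The leaves of the star vertex-gadget for the vertex `(i, x)`. -/
def vertexGadgetLeaves (i : Fin κ) (x : Fin n) : Set (Node G) :=
  {w | ∃ j p, w.1 = PreNode.vleaf i x j p}

/-- The leaves of the star edge-gadget for the edge `(i,x)(j,y)`. -/
def edgeGadgetLeaves (i j : Fin κ) (x y : Fin n) : Set (Node G) :=
  {w | ∃ s p, w.1 = PreNode.eleaf i j x y s p}

/-- A stars solution: a set `T` of nodes with `|T| = |S|` satisfying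
conditions (S1), (S2) and (S3). -/
def IsStarsSolution (T : Set (Node G)) : Prop :=
  T.ncard = (initialS G).ncard ∧
  -- (S1): no block, root, or connector node is in `T`
  (∀ w ∈ T, (∃ i x j p, w.1 = PreNode.vleaf i x j p) ∨
      (∃ i j x y s p, w.1 = PreNode.eleaf i j x y s p)) ∧
  -- (S2): in each vertex-block exactly one vertex-gadget has none of its
  -- leaves in `T`, and every other vertex-gadget has all of its leaves in `T`
  (∀ i : Fin κ, ∃ x : Fin n,
      vertexGadgetLeaves G i x ∩ T = ∅ ∧
      ∀ x' : Fin n, x' ≠ x → vertexGadgetLeaves G i x' ⊆ T) ∧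
  -- (S3): in each edge-block exactly one edge-gadget has all of its leaves in
  -- `T`, and every other edge-gadget has none of its leaves in `T`
  (∀ i j : Fin κ, i < j → ∃ x y : Fin n, G.Adj (i, x) (j, y) ∧
      edgeGadgetLeaves G i j x y ⊆ T ∧
      ∀ x' y' : Fin n, G.Adj (i, x') (j, y') → (x', y') ≠ (x, y) →
        edgeGadgetLeaves G i j x' y' ∩ T = ∅)

/-- The Multicolored Clique instance is a yes-instance: there is a clique of
`G` with exactly one vertex from each color class. -/
def MCCYes : Prop :=
  ∃ f : Fin κ → Fin n, ∀ i j : Fin κ, i ≠ j → G.Adj (i, f i) (j, f j)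

end StarsConstruction

/-- Every connected component of `K` is a star `K_{1,m}` for some `m ≥ 0`. -/
def ComponentsAreStars {W : Type*} (K : SimpleGraph W) : Prop :=
  ∀ C : K.ConnectedComponent, ∃ c ∈ C.supp,
    ∀ a ∈ C.supp, ∀ b ∈ C.supp, K.Adj a b ↔ ((a = c ∨ b = c) ∧ a ≠ b)

/-- `X` is a modulator to stars of `K`: every connected component of `K − X`
is a star. -/
def IsStarsModulator {W : Type*} (K : SimpleGraph W) (X : Set W) : Prop :=
  ComponentsAreStars (SimpleGraph.induce Xᶜ K)

/-- The modulator to stars number: the minimum size of a modulator to stars. -/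
noncomputable def starsModulatorNumber {W : Type*} (K : SimpleGraph W) : ℕ :=
  sInf {k | ∃ X : Set W, IsStarsModulator K X ∧ X.ncard = k}

namespace StarsConstruction

/-- The root of the gadget a node belongs to (itself for non-leaves). -/
def preRoot {κ n : ℕ} : PreNode κ n → PreNode κ n
  | PreNode.vleaf i x _ _ => PreNode.vroot i x
  | PreNode.eleaf i j x y _ _ => PreNode.eroot i j x y
  | w => w

/-- The nodes in the modulator. -/
def InMod {κ n : ℕ} (w : PreNode κ n) : Prop :=
  (∃ i j s k, w = PreNode.conn i j s k) ∨
    (∃ i j, w = PreNode.eblock i j) ∨ (∃ i, w = PreNode.vblock i)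

theorem inMod_connFor {κ n : ℕ} (i j : Fin κ) (s : Bool) :
    InMod (connFor i j s : PreNode κ n) := by
  unfold connFor InMod
  split_ifs <;> simp

theorem rel_iff {κ n : ℕ} (a b : PreNode κ n) (hb : ¬ InMod b) :
    Rel a b ↔ (a ≠ b ∧ preRoot a = b) := by
  constructor
  · rintro (⟨i, x, rfl, rfl⟩ | ⟨i, x, j, p, rfl, rfl⟩ | ⟨i, x, j, p, _, rfl, rfl⟩ |
      ⟨i, x, j, p, _, rfl, rfl⟩ | ⟨i, j, x, y, rfl, rfl⟩ | ⟨i, j, x, y, s, p, rfl, rfl⟩ |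
      ⟨i, j, x, y, p, _, rfl, rfl⟩ | ⟨i, j, x, y, p, _, rfl, rfl⟩ |
      ⟨i, j, x, y, p, _, rfl, rfl⟩ | ⟨i, j, x, y, p, _, rfl, rfl⟩)
    all_goals first
      | exact absurd (inMod_connFor _ _ _) hb
      | (exfalso; apply hb; simp [InMod]; done)
      | simp [preRoot]
  · rintro ⟨hne, rfl⟩
    cases a <;> simp [preRoot] at hne ⊢ <;> simp [Rel]

theorem preRoot_idem {κ n : ℕ} (a : PreNode κ n) : preRoot (preRoot a) = preRoot a := by
  cases a <;> rfl

theorem preRoot_valid {κ n : ℕ} (G : SimpleGraph (Fin κ × Fin n)) (a : PreNode κ n)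
    (h : Valid G a) : Valid G (preRoot a) := by
  cases a <;> simp_all [preRoot, Valid]

theorem preRoot_not_inMod {κ n : ℕ} (a : PreNode κ n) (h : ¬ InMod a) :
    ¬ InMod (preRoot a) := by
  cases a <;> simp_all [preRoot, InMod]

theorem isStarsModulator_inMod {κ n : ℕ} (G : SimpleGraph (Fin κ × Fin n)) :
    IsStarsModulator (H G) {w : Node G | InMod w.1} := by
  set K := SimpleGraph.induce {w : Node G | InMod w.1}ᶜ (H G) with hK
  have hadj : ∀ a b, K.Adj a b ↔
      (a ≠ b ∧ (preRoot a.1.1 = b.1.1 ∨ preRoot b.1.1 = a.1.1)) := by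
    intro a b
    have hab : a ≠ b ↔ a.1.1 ≠ b.1.1 := by
      simp [Subtype.ext_iff]
    have hab' : a ≠ b ↔ a.1 ≠ b.1 := by
      simp [Subtype.ext_iff]
    have h1 := rel_iff a.1.1 b.1.1 b.2
    have h2 := rel_iff b.1.1 a.1.1 a.2
    simp only [hK, SimpleGraph.comap_adj, H, SimpleGraph.fromRel_adj,
      Function.Embedding.subtype_apply, h1, h2]
    rw [← hab', ne_comm (a := b.1.1), ← hab]
    tauto
  have hreach : ∀ a b, K.Reachable a b → preRoot a.1.1 = preRoot b.1.1 := by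
    rintro a b ⟨w⟩
    induction w with
    | nil => rfl
    | cons h _ ih =>
      rw [← ih]
      rcases ((hadj _ _).1 h).2 with h | h
      · rw [← h, preRoot_idem]
      · rw [← h, preRoot_idem]
  intro C
  induction C using SimpleGraph.ConnectedComponent.ind with
  | h v =>
  let c : ({w : Node G | InMod w.1}ᶜ : Set (Node G)) :=
    ⟨⟨preRoot v.1.1, preRoot_valid G _ v.1.2⟩, preRoot_not_inMod _ v.2⟩
  have hcv : K.Reachable c v := by
    by_cases h : c = v
    · rw [h]
    · exact ((hadj c v).2 ⟨h, Or.inr rfl⟩).reachable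
  refine ⟨c, ?_, ?_⟩
  · simpa [SimpleGraph.ConnectedComponent.mem_supp_iff] using hcv
  · intro a ha b hb
    have ha' : preRoot a.1.1 = c.1.1 :=
      hreach a v (by simpa [SimpleGraph.ConnectedComponent.mem_supp_iff] using ha)
    have hb' : preRoot b.1.1 = c.1.1 :=
      hreach b v (by simpa [SimpleGraph.ConnectedComponent.mem_supp_iff] using hb)
    refine (hadj a b).trans ?_
    rw [ha', hb']
    have e1 : a = c ↔ c.1.1 = a.1.1 := by
      rw [eq_comm]; simp only [Subtype.ext_iff]
    have e2 : b = c ↔ c.1.1 = b.1.1 := by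
      rw [eq_comm]; simp only [Subtype.ext_iff]
    rw [e1, e2]
    tauto

/-- Encoding of modulator nodes. -/
def code {κ n : ℕ} : PreNode κ n → Fin κ ⊕ (Finset (Fin κ) × Option (Bool × Bool)) ⊕ Unit
  | PreNode.vblock i => Sum.inl i
  | PreNode.eblock i j => Sum.inr (Sum.inl ({i, j}, none))
  | PreNode.conn i j s k => Sum.inr (Sum.inl ({i, j}, some (s, k)))
  | _ => Sum.inr (Sum.inr ())

theorem pair_inj {κ : ℕ} {i j k l : Fin κ} (h : i < j) (h' : k < l)
    (e : ({i, j} : Finset (Fin κ)) = {k, l}) : i = k ∧ j = l := by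
  have a1 : i ∈ ({k, l} : Finset (Fin κ)) := by rw [← e]; simp
  have a2 : j ∈ ({k, l} : Finset (Fin κ)) := by rw [← e]; simp
  simp only [Finset.mem_insert, Finset.mem_singleton] at a1 a2
  omega

theorem ncard_inMod {κ n : ℕ} (G : SimpleGraph (Fin κ × Fin n)) :
    {w : Node G | InMod w.1}.ncard ≤ 5 * Nat.choose κ 2 + κ := by
  let T : Finset (Fin κ ⊕ (Finset (Fin κ) × Option (Bool × Bool)) ⊕ Unit) :=
    (Finset.univ : Finset (Fin κ)).disjSum
      (((Finset.powersetCard 2 (Finset.univ : Finset (Fin κ))) ×ˢ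
        (Finset.univ : Finset (Option (Bool × Bool)))).disjSum ∅)
  have hT : T.card = 5 * Nat.choose κ 2 + κ := by
    simp [T, Finset.card_disjSum, Finset.card_product]
    ring
  rw [← hT, ← Set.ncard_coe_finset T]
  refine Set.ncard_le_ncard_of_injOn (fun w => code w.1) ?_ ?_ (Finset.finite_toSet T)
  · rintro ⟨w, hw⟩ (⟨i, j, s, k, rfl⟩ | ⟨i, j, rfl⟩ | ⟨i, rfl⟩)
    · have : i < j := hw
      simp [code, T, Finset.mem_powersetCard, Finset.card_pair this.ne]
    · have : i < j := hw
      simp [code, T, Finset.mem_powersetCard, Finset.card_pair this.ne]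
    · simp [code, T]
  · rintro ⟨w, hw⟩ h1 ⟨w', hw'⟩ h2 e
    apply Subtype.ext
    rcases h1 with ⟨i, j, s, k, rfl⟩ | ⟨i, j, rfl⟩ | ⟨i, rfl⟩ <;>
    rcases h2 with ⟨i', j', s', k', rfl⟩ | ⟨i', j', rfl⟩ | ⟨i', rfl⟩ <;>
    simp only [code, Sum.inr.injEq, Sum.inl.injEq, Prod.mk.injEq, Option.some.injEq,
      reduceCtorEq, and_false, and_true] at e
    · obtain ⟨rfl, rfl⟩ := pair_inj hw hw' e.1
      obtain ⟨rfl, rfl⟩ := e.2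
      rfl
    · obtain ⟨rfl, rfl⟩ := pair_inj hw hw' e
      rfl
    · rw [e]

end StarsConstruction

open StarsConstruction in
/-- For the graph `H` of the stars construction, the set of all green
connector nodes, gray edge block nodes and teal vertex block nodes is a
modulator to stars; consequently `ms(H) ≤ 5·(κ choose 2) + κ`. -/
theorem stars_modulator_number_le {κ n : ℕ} (G : SimpleGraph (Fin κ × Fin n)) :
    IsStarsModulator (H G)
      {w : Node G | (∃ i j s k, w.1 = PreNode.conn i j s k) ∨
        (∃ i j, w.1 = PreNode.eblock i j) ∨ (∃ i, w.1 = PreNode.vblock i)} ∧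
    starsModulatorNumber (H G) ≤ 5 * Nat.choose κ 2 + κ := by
  have h := isStarsModulator_inMod G
  refine ⟨h, le_trans ?_ (ncard_inMod G)⟩
  unfold starsModulatorNumber
  exact Nat.sInf_le ⟨_, h, rfl⟩
end

section
/- If the Multicolored Clique instance (G, κ) is a yes-instance, then in the graph H of the stars construction there exists a stars solution T that is reachable from the initial configuration S (all leaves of all vertex-gadgets) within the budget b = 2n(κ−1)κ token slides in the discovery token sliding model. -/
namespace TokenDiscovery

theorem reach_aux {V α : Type*} [DecidableEq α] (G : SimpleGraph V) (c g mid : α → V)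
    (A : Finset α) (h1 : ∀ a ∈ A, G.Adj (c a) (mid a)) (h2 : ∀ a ∈ A, G.Adj (mid a) (g a)) :
    ∃ F : ℕ → α → V, F 0 = c ∧ (∀ i, i < 2 * A.card → Step G (F i) (F (i + 1))) ∧
      F (2 * A.card) = fun a => if a ∈ A then g a else c a := by
  induction A using Finset.induction_on with
  | empty => exact ⟨fun _ => c, rfl, by simp, by simp⟩
  | insert b A hb ih =>
    obtain ⟨F, hF0, hFs, hFe⟩ := ih (fun a ha => h1 a (Finset.mem_insert_of_mem ha))
      (fun a ha => h2 a (Finset.mem_insert_of_mem ha))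
    have hcard : 2 * (insert b A).card = 2 * A.card + 2 := by
      rw [Finset.card_insert_of_notMem hb]; ring
    rw [hcard]
    set m := 2 * A.card with hm
    refine ⟨fun i => if i ≤ m then F i else if i = m + 1 then Function.update (F m) b (mid b)
      else Function.update (F m) b (g b), by simpa using hF0, ?_, ?_⟩
    · intro i hi
      rcases lt_trichotomy i m with h | h | h
      · have h' : i ≤ m := h.le
        have h'' : i + 1 ≤ m := h
        simp only [h', h'', if_true]
        exact hFs i h
      · subst h
        refine ⟨b, ?_, ?_⟩
        · simp [hFe, hb, h1 b (Finset.mem_insert_self _ _)]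
        · intro j hj
          simp [Function.update_of_ne hj]
      · have : i = m + 1 := by omega
        subst this
        refine ⟨b, ?_, ?_⟩
        · simp [h2 b (Finset.mem_insert_self _ _)]
        · intro j hj
          simp [Function.update_of_ne hj]
    · funext a
      by_cases ha : a = b
      · subst ha; simp
      · simp [hFe, ha]

end TokenDiscovery

namespace StarsConstruction

variable {κ n : ℕ}

/-- Target position of each token. -/
def tgt (f : Fin κ → Fin n) : PreNode κ n → PreNode κ n
  | PreNode.vleaf i x j p =>
      if x = f i then
        (if i < j then PreNode.eleaf i j (f i) (f j) false p
          else PreNode.eleaf j i (f j) (f i) true p)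
      else PreNode.vleaf i x j p
  | w => w

/-- Intermediate position of each moving token. -/
def midp : PreNode κ n → PreNode κ n
  | PreNode.vleaf i x j p => connFor i j (decide ((p : ℕ) ≤ (x : ℕ)))
  | w => w

theorem tgt_valid (G : SimpleGraph (Fin κ × Fin n)) (f : Fin κ → Fin n)
    (hf : ∀ i j : Fin κ, i ≠ j → G.Adj (i, f i) (j, f j)) (w : PreNode κ n)
    (hw : Valid G w) : Valid G (tgt f w) := by
  cases w with
  | vleaf i x j p =>
    have hw' : j ≠ i := hw
    simp only [tgt]
    split_ifs with h1 h2
    · exact ⟨h2, hf _ _ h2.ne⟩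
    · exact ⟨lt_of_le_of_ne (not_lt.1 h2) hw', hf _ _ hw'⟩
    · exact hw
  | _ => exact hw

theorem midp_valid (G : SimpleGraph (Fin κ × Fin n)) (w : PreNode κ n)
    (hw : Valid G w) : Valid G (midp w) := by
  cases w with
  | vleaf i x j p =>
    have hw' : j ≠ i := hw
    simp only [midp, connFor]
    split_ifs with h2
    · exact h2
    · exact lt_of_le_of_ne (not_lt.1 h2) hw'
  | _ => exact hw

theorem rel_mid (i : Fin κ) (x : Fin n) (j : Fin κ) (p : Fin n) :
    Rel (PreNode.vleaf i x j p) (midp (PreNode.vleaf i x j p)) := by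
  unfold Rel
  by_cases h : (p : ℕ) ≤ (x : ℕ)
  · right; right; left
    exact ⟨i, x, j, p, h, rfl, by simp [midp, h]⟩
  · right; right; right; left
    exact ⟨i, x, j, p, not_le.1 h, rfl, by simp [midp, h]⟩

theorem rel_tgt (f : Fin κ → Fin n) (i j : Fin κ) (p : Fin n) :
    Rel (tgt f (PreNode.vleaf i (f i) j p)) (midp (PreNode.vleaf i (f i) j p)) := by
  unfold Rel
  by_cases h : (p : ℕ) ≤ (f i : ℕ)
  · by_cases hij : i < j
    · right; right; right; right; right; right; left
      exact ⟨i, j, f i, f j, p, h, by simp [tgt, hij], by simp [midp, h]⟩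
    · right; right; right; right; right; right; right; right; left
      exact ⟨j, i, f j, f i, p, h, by simp [tgt, hij], by simp [midp, h]⟩
  · by_cases hij : i < j
    · right; right; right; right; right; right; right; left
      exact ⟨i, j, f i, f j, p, not_le.1 h, by simp [tgt, hij], by simp [midp, h]⟩
    · right; right; right; right; right; right; right; right; right
      exact ⟨j, i, f j, f i, p, not_le.1 h, by simp [tgt, hij], by simp [midp, h]⟩

theorem tgt_inj (f : Fin κ → Fin n) (i : Fin κ) (x : Fin n) (j : Fin κ) (p : Fin n)
    (i' : Fin κ) (x' : Fin n) (j' : Fin κ) (p' : Fin n)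
    (h : tgt f (PreNode.vleaf i x j p) = tgt f (PreNode.vleaf i' x' j' p')) :
    PreNode.vleaf i x j p = PreNode.vleaf i' x' j' p' := by
  simp only [tgt] at h
  split_ifs at h <;> simp_all

end StarsConstruction

open StarsConstruction in
/-- If the Multicolored Clique instance is a yes-instance, then in the graph of
the stars construction some stars solution is reachable from the initial
configuration (all leaves of all vertex-gadgets) within `2n(κ−1)κ` token
slides in the discovery token sliding model. -/
theorem stars_solution_of_mcc_yes {κ n : ℕ} (G : SimpleGraph (Fin κ × Fin n))
    (h : MCCYes G) :
    ∃ T : Set (Node G), IsStarsSolution G T ∧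
      TokenDiscovery.Reachable (H G) (fun a : ↥(initialS G) => (a : Node G)) T
        (2 * n * (κ - 1) * κ) := by
  classical
  obtain ⟨f, hf⟩ := h
  let g : ↥(initialS G) → Node G := fun a => ⟨tgt f a.1.1, tgt_valid G f hf _ a.1.2⟩
  let mid : ↥(initialS G) → Node G := fun a => ⟨midp a.1.1, midp_valid G _ a.1.2⟩
  have ginj : Function.Injective g := by
    rintro ⟨⟨w, hw⟩, i, x, j, p, e⟩ ⟨⟨w', hw'⟩, i', x', j', p', e'⟩ hh
    simp only at e e'
    subst e e'
    have := tgt_inj f _ _ _ _ _ _ _ _ (congrArg Subtype.val hh)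
    exact Subtype.ext (Subtype.ext this)
  have gmem : ∀ (i : Fin κ) (x : Fin n) (j : Fin κ) (p : Fin n), j ≠ i → 
      ∀ w : Node G, w.1 = tgt f (PreNode.vleaf i x j p) → w ∈ Set.range g := by
    intro i x j p hij w hw
    exact ⟨⟨⟨PreNode.vleaf i x j p, hij⟩, i, x, j, p, rfl⟩, Subtype.ext hw.symm⟩
  refine ⟨Set.range g, ⟨?_, ?_, ?_, ?_⟩, ?_⟩
  · rw [← Set.image_univ, Set.ncard_image_of_injective _ ginj, Set.ncard_univ]
    rfl
  · rintro _ ⟨⟨⟨w, hw⟩, i, x, j, p, e⟩, rfl⟩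
    simp only at e
    subst e
    simp only [g, tgt]
    split_ifs
    · exact Or.inr ⟨_, _, _, _, _, _, rfl⟩
    · exact Or.inr ⟨_, _, _, _, _, _, rfl⟩
    · exact Or.inl ⟨_, _, _, _, rfl⟩
  · intro i
    refine ⟨f i, ?_, ?_⟩
    · rw [Set.eq_empty_iff_forall_notMem]
      rintro _ ⟨⟨j, p, e⟩, ⟨⟨w, hw⟩, i', x', j', p', e'⟩, rfl⟩
      simp only at e'
      subst e'
      simp only [g, tgt] at e
      split_ifs at e <;> simp_all
    · rintro x hx ⟨w, hw⟩ ⟨j, p, e⟩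
      simp only at e
      subst e
      exact gmem i x j p hw _ (by simp [tgt, hx])
  · intro i j hij
    refine ⟨f i, f j, hf _ _ hij.ne, ?_, ?_⟩
    · rintro ⟨w, hw⟩ ⟨s, p, e⟩
      simp only at e
      subst e
      cases s
      · exact gmem i (f i) j p hij.ne' _ (by simp [tgt, hij])
      · exact gmem j (f j) i p hij.ne _ (by simp [tgt, hij.not_gt])
    · intro x' y' _ hne
      rw [Set.eq_empty_iff_forall_notMem]
      rintro _ ⟨⟨s, p, e⟩, ⟨⟨w, hw⟩, i', x', j', p', e'⟩, rfl⟩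
      simp only at e'
      subst e'
      simp only [g, tgt] at e
      split_ifs at e
      · simp only [PreNode.eleaf.injEq] at e
        obtain ⟨rfl, rfl, rfl, rfl, -⟩ := e
        exact hne rfl
      · simp only [PreNode.eleaf.injEq] at e
        obtain ⟨rfl, rfl, rfl, rfl, -⟩ := e
        exact hne rfl
  · let I := {q : (Fin κ × Fin κ) × Fin n // q ∈ (Finset.univ : Finset (Fin κ)).offDiag ×ˢ (Finset.univ : Finset (Fin n))}
    let tok : I → ↥(initialS G) := fun q =>
      ⟨⟨PreNode.vleaf q.1.1.1 (f q.1.1.1) q.1.1.2 q.1.2, by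
        have h1 := (Finset.mem_offDiag.1 (Finset.mem_product.1 q.2).1).2.2
        exact Ne.symm h1⟩, _, _, _, _, rfl⟩
    let A : Finset ↥(initialS G) := Finset.univ.image tok
    have hA : A.card ≤ n * (κ - 1) * κ := by
      refine Finset.card_image_le.trans ?_
      rw [Finset.card_univ, Fintype.card_coe, Finset.card_product, Finset.offDiag_card]
      simp only [Finset.card_univ, Fintype.card_fin]
      rw [mul_assoc, mul_comm, Nat.sub_mul, one_mul]
    obtain ⟨F, hF0, hFs, hFe⟩ := TokenDiscovery.reach_aux (H G) (fun a : ↥(initialS G) => (a : Node G))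
      g mid A (by
        intro a ha
        obtain ⟨q, -, rfl⟩ := Finset.mem_image.1 ha
        refine (SimpleGraph.fromRel_adj _ _ _).2 ⟨?_, Or.inl (rel_mid _ _ _ _)⟩
        intro hh
        have := congrArg Subtype.val hh
        simp only [tok, mid, midp, connFor] at this
        split_ifs at this) (by
        intro a ha
        obtain ⟨q, -, rfl⟩ := Finset.mem_image.1 ha
        refine (SimpleGraph.fromRel_adj _ _ _).2 ⟨?_, Or.inr (rel_tgt f _ _ _)⟩
        intro hh
        have := congrArg Subtype.val hh
        simp only [tok, mid, g, tgt, midp, connFor] at this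
        split_ifs at this <;> simp_all)
    have hg : F (2 * A.card) = g := by
      rw [hFe]
      funext a
      split_ifs with ha
      · rfl
      · obtain ⟨⟨w, hw⟩, i, x, j, p, e⟩ := a
        simp only at e
        subst e
        have hw' : j ≠ i := hw
        have hx : x ≠ f i := by
          rintro rfl
          exact ha (Finset.mem_image.2 ⟨⟨((i, j), p), by simp [hw'.symm]⟩, Finset.mem_univ _, rfl⟩)
        exact Subtype.ext (by simp [g, tgt, hx])
    refine ⟨2 * A.card, F, ?_, hF0, hFs, ?_, ?_⟩
    · calc 2 * A.card ≤ 2 * (n * (κ - 1) * κ) := Nat.mul_le_mul_left _ hA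
        _ = _ := by ring
    · rw [hg]; exact ginj
    · rw [hg]
end

section
/- Let T be a stars solution in the graph H of the stars construction and let a transformation sequence of at most b = 2n(κ−1)κ token slides in the discovery token sliding model move the initial configuration S to T. Then: (i) every token that moves performs exactly two token slides and its intermediate vertex is a green connector node; (ii) for each edge-block, T contains all 2n leaves of exactly one edge-gadget of that block; (iii) for each vertex-block, exactly n(κ−1) tokens slide out of the block, all coming from exactly one vertex-gadget of that block. -/
namespace StarsAux

open StarsConstruction

/-- A sequence without moves on `[a, b)` is constant there. -/
theorem const_of_no_move {V : Type*} (g : ℕ → V) (a b : ℕ) (hab : a ≤ b)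
    (h : ∀ i, a ≤ i → i < b → g (i + 1) = g i) : g b = g a := by
  induction b, hab using Nat.le_induction with
  | base => rfl
  | succ b hb ih =>
    rw [h b hb (Nat.lt_succ_self b)]
    exact ih (fun i h1 h2 => h i h1 (by omega))

variable {κ n : ℕ}

theorem vblock_ne_conn (i : Fin κ) (c d : Fin κ) (k : Bool) :
    (PreNode.vblock i : PreNode κ n) ≠ connFor c d k := by
  unfold connFor; split_ifs <;> simp

theorem vroot_ne_conn (i : Fin κ) (x : Fin n) (c d : Fin κ) (k : Bool) :
    (PreNode.vroot i x : PreNode κ n) ≠ connFor c d k := by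
  unfold connFor; split_ifs <;> simp

theorem vleaf_ne_conn (i : Fin κ) (x : Fin n) (j : Fin κ) (p : Fin n) (c d : Fin κ) (k : Bool) :
    (PreNode.vleaf i x j p : PreNode κ n) ≠ connFor c d k := by
  unfold connFor; split_ifs <;> simp

theorem eblock_ne_conn (i : Fin κ) (j : Fin κ) (c d : Fin κ) (k : Bool) :
    (PreNode.eblock i j : PreNode κ n) ≠ connFor c d k := by
  unfold connFor; split_ifs <;> simp

theorem eroot_ne_conn (i : Fin κ) (j : Fin κ) (x : Fin n) (y : Fin n) (c d : Fin κ) (k : Bool) :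
    (PreNode.eroot i j x y : PreNode κ n) ≠ connFor c d k := by
  unfold connFor; split_ifs <;> simp

theorem eleaf_ne_conn (i : Fin κ) (j : Fin κ) (x : Fin n) (y : Fin n) (s : Bool) (p : Fin n) (c d : Fin κ) (k : Bool) :
    (PreNode.eleaf i j x y s p : PreNode κ n) ≠ connFor c d k := by
  unfold connFor; split_ifs <;> simp

variable (G : SimpleGraph (Fin κ × Fin n))

theorem not_adj_leaf (u w : Node G) (hu : ∃ i x j p, u.1 = PreNode.vleaf i x j p)
    (hw : ∃ i j x y s p, w.1 = PreNode.eleaf i j x y s p) : ¬ (H G).Adj u w := by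
  obtain ⟨i, x, j, p, hu⟩ := hu
  obtain ⟨i', j', x', y', s', p', hw⟩ := hw
  unfold H
  rw [SimpleGraph.fromRel_adj]
  rw [hu, hw]
  unfold StarsConstruction.Rel
  rintro ⟨-, h⟩
  simp [vblock_ne_conn, vroot_ne_conn, vleaf_ne_conn, eblock_ne_conn, eroot_ne_conn, eleaf_ne_conn] at h

theorem conn_of_adj (u v w : Node G) (hu : ∃ i x j p, u.1 = PreNode.vleaf i x j p)
    (hw : ∃ i j x y s p, w.1 = PreNode.eleaf i j x y s p)
    (h1 : (H G).Adj u v) (h2 : (H G).Adj v w) :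
    ∃ c d s k, v.1 = PreNode.conn c d s k := by
  obtain ⟨i, x, j, p, hu⟩ := hu
  obtain ⟨i', j', x', y', s', p', hw⟩ := hw
  unfold H at h1 h2
  rw [SimpleGraph.fromRel_adj] at h1 h2
  rw [hu] at h1
  rw [hw] at h2
  obtain ⟨-, h1⟩ := h1
  obtain ⟨-, h2⟩ := h2
  unfold StarsConstruction.Rel at h1 h2
  cases hv : v.1 with
  | conn c d s k => exact ⟨c, d, s, k, rfl⟩
  | _ => rw [hv] at h1 h2; exfalso; simp [vblock_ne_conn, vroot_ne_conn, vleaf_ne_conn, eblock_ne_conn, eroot_ne_conn, eleaf_ne_conn] at h1 h2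

/-- Node of a vertex leaf. -/
def leafS (i : Fin κ) (x : Fin n) (j : Fin κ) (hj : j ≠ i) (p : Fin n) : ↥(initialS G) :=
  ⟨⟨PreNode.vleaf i x j p, hj⟩, i, x, j, p, rfl⟩

instance : Finite ↥(initialS G) := by
  apply Finite.of_surjective
    (fun q : (Σ i : Fin κ, Fin n × {j : Fin κ // j ≠ i} × Fin n) =>
      leafS G q.1 q.2.1 q.2.2.1.1 q.2.2.1.2 q.2.2.2)
  rintro ⟨⟨w, hw⟩, i, x, j, p, h⟩
  simp only at h
  subst h
  exact ⟨⟨i, x, ⟨j, hw⟩, p⟩, rfl⟩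

theorem gadget_ncard (i : Fin κ) (x : Fin n) :
    {a : ↥(initialS G) | ∃ j p, (a : Node G).1 = PreNode.vleaf i x j p}.ncard = n * (κ - 1) := by
  have : {a : ↥(initialS G) | ∃ j p, (a : Node G).1 = PreNode.vleaf i x j p} =
      Set.range (fun q : {j : Fin κ // j ≠ i} × Fin n => leafS G i x q.1.1 q.1.2 q.2) := by
    ext ⟨⟨w, hw⟩, h⟩
    constructor
    · rintro ⟨j, p, h'⟩
      simp only at h'
      subst h'
      exact ⟨(⟨j, hw⟩, p), rfl⟩
    · rintro ⟨⟨⟨j, hj⟩, p⟩, h'⟩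
      exact ⟨j, p, by rw [← h']; rfl⟩
  rw [this, ← Set.image_univ, Set.ncard_image_of_injective, Set.ncard_univ]
  · simp [Nat.card_eq_fintype_card, Fintype.card_subtype_compl, mul_comm]
  · rintro ⟨⟨j, hj⟩, p⟩ ⟨⟨j', hj'⟩, p'⟩ h
    have h' := congrArg (fun a : ↥(initialS G) => a.1.1) h
    simp only [leafS, PreNode.vleaf.injEq] at h'
    grind

theorem missing_card (T : Set (Node G)) (hT : ∀ i : Fin κ, ∃ x : Fin n,
      vertexGadgetLeaves G i x ∩ T = ∅) :
    n * (κ - 1) * κ ≤ {a : ↥(initialS G) | (a : Node G) ∉ T}.ncard := by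
  choose x hx using hT
  let F : (Σ i : Fin κ, {j : Fin κ // j ≠ i} × Fin n) → ↥(initialS G) := fun q =>
    leafS G q.1 (x q.1) q.2.1.1 q.2.1.2 q.2.2
  have hF : Function.Injective F := by
    rintro ⟨i, ⟨j, hj⟩, p⟩ ⟨i', ⟨j', hj'⟩, p'⟩ h
    have h' := congrArg (fun a : ↥(initialS G) => a.1.1) h
    simp only [F, leafS, PreNode.vleaf.injEq] at h'
    obtain ⟨rfl, -, rfl, rfl⟩ := h'
    rfl
  have hsub : Set.range F ⊆ {a : ↥(initialS G) | (a : Node G) ∉ T} := by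
    rintro _ ⟨⟨i, ⟨j, hj⟩, p⟩, rfl⟩ hmem
    have : (F ⟨i, ⟨j, hj⟩, p⟩).1 ∈ vertexGadgetLeaves G i (x i) ∩ T := ⟨⟨j, p, rfl⟩, hmem⟩
    rw [hx] at this
    exact this
  refine le_trans (le_of_eq ?_) (Set.ncard_le_ncard hsub (Set.toFinite _))
  rw [← Set.image_univ, Set.ncard_image_of_injective _ hF, Set.ncard_univ]
  simp [Nat.card_eq_fintype_card, Fintype.card_subtype_compl]
  ring

end StarsAux

open StarsConstruction in
/-- Properties of any transformation sequence of at most `2n(κ−1)κ` token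
slides moving the initial configuration to a stars solution `T`:
(i) every token that moves performs exactly two token slides and its
intermediate vertex is a green connector node; (ii) for each edge-block, `T`
contains all `2n` leaves of exactly one edge-gadget of that block; (iii) for
each vertex-block, exactly `n(κ−1)` tokens slide, all coming from exactly one
vertex-gadget of that block. -/
theorem stars_solution_sequence_structure {κ n : ℕ} (G : SimpleGraph (Fin κ × Fin n))
    (T : Set (Node G)) (hT : IsStarsSolution G T)
    (m : ℕ) (f : ℕ → ↥(initialS G) → Node G)
    (hm : m ≤ 2 * n * (κ - 1) * κ)
    (h0 : f 0 = fun a => Subtype.val a)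
    (hstep : ∀ i : ℕ, i < m → TokenDiscovery.Step (H G) (f i) (f (i + 1)))
    (hinj : Function.Injective (f m)) (hrange : Set.range (f m) = T) :
    -- (i)
    (∀ a : ↥(initialS G), ({i : ℕ | i < m ∧ f (i + 1) a ≠ f i a}).Nonempty →
        ∃ i₁ i₂ : ℕ, i₁ < i₂ ∧ {i : ℕ | i < m ∧ f (i + 1) a ≠ f i a} = {i₁, i₂} ∧
          ∃ c d s k, (f (i₁ + 1) a).1 = PreNode.conn c d s k) ∧
    -- (ii)
    (∀ i j : Fin κ, i < j → ∃ x y : Fin n, G.Adj (i, x) (j, y) ∧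
        edgeGadgetLeaves G i j x y ⊆ T ∧
        ∀ x' y' : Fin n, G.Adj (i, x') (j, y') → (x', y') ≠ (x, y) →
          edgeGadgetLeaves G i j x' y' ∩ T = ∅) ∧
    -- (iii)
    (∀ i : Fin κ, ∃ x : Fin n,
        (∀ a : ↥(initialS G), (∃ j p, (a : Node G).1 = PreNode.vleaf i x j p) →
            ∃ s : ℕ, s < m ∧ f (s + 1) a ≠ f s a) ∧
        (∀ a : ↥(initialS G), ∀ x' : Fin n, x' ≠ x →
            (∃ j p, (a : Node G).1 = PreNode.vleaf i x' j p) →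
            ∀ s : ℕ, s < m → f (s + 1) a = f s a) ∧
        {a : ↥(initialS G) | (∃ j p, (a : Node G).1 = PreNode.vleaf i x j p) ∧
            ∃ s : ℕ, s < m ∧ f (s + 1) a ≠ f s a}.ncard = n * (κ - 1)) := by
  classical
  obtain ⟨-, hS1, hS2, hS3⟩ := hT
  have : Fintype ↥(initialS G) := Fintype.ofFinite _
  -- the tokens ending outside `S`
  set E : Finset ↥(initialS G) := Finset.univ.filter (fun a => f m a ∉ initialS G) with hE
  have hTm : ∀ a, f m a ∈ T := fun a => hrange ▸ Set.mem_range_self a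
  have hEcard : n * (κ - 1) * κ ≤ E.card := by
    have h1 := StarsAux.missing_card G T (fun i => (hS2 i).imp fun x hx => hx.1)
    have h2 : {a : ↥(initialS G) | (a : Node G) ∉ T}.ncard =
        (Finset.univ.filter (fun a : ↥(initialS G) => (a : Node G) ∉ T)).card := by
      rw [← Set.ncard_coe_finset]; congr 1; ext; simp
    have h3 : (Finset.univ.filter (fun a : ↥(initialS G) => f m a ∈ initialS G)).card ≤
        (Finset.univ.filter (fun a : ↥(initialS G) => (a : Node G) ∈ T)).card := by
      refine Finset.card_le_card_of_injOn
        (fun a => if h : f m a ∈ initialS G then ⟨f m a, h⟩ else a) ?_ ?_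
      · intro a ha
        have ha' : f m a ∈ initialS G := by simpa using ha
        simp [ha', hTm]
      · intro a ha b hb hab
        have ha' : f m a ∈ initialS G := by simpa using ha
        have hb' : f m b ∈ initialS G := by simpa using hb
        simp only [ha', hb', dif_pos, Subtype.mk.injEq] at hab
        exact hinj hab
    have h4 := Finset.card_filter_add_card_filter_not (s := (Finset.univ : Finset ↥(initialS G)))
      (fun a => f m a ∈ initialS G)
    have h5 := Finset.card_filter_add_card_filter_not (s := (Finset.univ : Finset ↥(initialS G)))
      (fun a => (a : Node G) ∈ T)
    have h6 : E.card = (Finset.univ.filter (fun a => ¬ (f m a ∈ initialS G))).card := by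
      rw [hE]
    rw [← h6] at h4
    omega
  -- move sets
  let M : ↥(initialS G) → Finset ℕ := fun a =>
    (Finset.range m).filter (fun i => f (i + 1) a ≠ f i a)
  have hMmem : ∀ a i, i ∈ M a ↔ i < m ∧ f (i + 1) a ≠ f i a := by
    intro a i; simp [M]
  have hadj : ∀ a i, i ∈ M a → (H G).Adj (f i a) (f (i + 1) a) := by
    intro a i hi
    obtain ⟨him, hne⟩ := (hMmem a i).1 hi
    obtain ⟨b, hb, hb'⟩ := hstep i him
    by_cases hab : a = b
    · rw [hab]; exact hb
    · exact absurd (hb' a hab) hne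
  have hconst : ∀ a s t, s ≤ t → t ≤ m → (∀ i, s ≤ i → i < t → i ∉ M a) → f t a = f s a := by
    intro a s t hst htm h
    refine StarsAux.const_of_no_move (fun i => f i a) s t hst ?_
    intro i h1 h2
    by_contra hne
    exact h i h1 h2 ((hMmem a i).2 ⟨by omega, hne⟩)
  have hsum : ∑ a, (M a).card ≤ m := by
    have : ∑ a, (M a).card =
        ∑ i ∈ Finset.range m, (Finset.univ.filter (fun a => f (i + 1) a ≠ f i a)).card := by
      simp only [M, Finset.card_filter]
      exact Finset.sum_comm
    rw [this]
    calc _ ≤ ∑ i ∈ Finset.range m, 1 := by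
          refine Finset.sum_le_sum fun i hi => ?_
          obtain ⟨b, hb, hb'⟩ := hstep i (Finset.mem_range.1 hi)
          refine Finset.card_le_one.2 ?_
          intro a ha c hc
          have ha' : f (i + 1) a ≠ f i a := by simpa using ha
          have hc' : f (i + 1) c ≠ f i c := by simpa using hc
          have e1 : a = b := by by_contra h; exact ha' (hb' a h)
          have e2 : c = b := by by_contra h; exact hc' (hb' c h)
          rw [e1, e2]
      _ = m := by simp
  have hf0 : ∀ a, f 0 a = a.1 := fun a => by rw [h0]
  have hstart : ∀ a, ∃ i x j p, (f 0 a).1 = PreNode.vleaf i x j p := fun a => by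
    rw [hf0]; exact a.2
  have hend : ∀ a ∈ E, ∃ i j x y s p, (f m a).1 = PreNode.eleaf i j x y s p := by
    intro a ha
    rcases hS1 _ (hTm a) with h | h
    · exact absurd h (Finset.mem_filter.1 ha).2
    · exact h
  have htwo : ∀ a ∈ E, 2 ≤ (M a).card := by
    intro a ha
    by_contra hlt
    have : (M a).card = 0 ∨ (M a).card = 1 := by omega
    rcases this with h | h
    · rw [Finset.card_eq_zero] at h
      have := hconst a 0 m (Nat.zero_le _) le_rfl (by simp [h])
      exact (Finset.mem_filter.1 ha).2 (by rw [this, hf0]; exact a.2)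
    · obtain ⟨i, hi⟩ := Finset.card_eq_one.1 h
      have him : i ∈ M a := by simp [hi]
      have hlt' := ((hMmem a i).1 him).1
      have e1 := hconst a 0 i (Nat.zero_le _) (by omega) (by
        intro k _ hk; simp only [hi, Finset.mem_singleton]; omega)
      have e2 := hconst a (i + 1) m (by omega) le_rfl (by
        intro k hk _; simp only [hi, Finset.mem_singleton]; omega)
      have := hadj a i him
      rw [e1, ← e2] at this
      exact StarsAux.not_adj_leaf G _ _ (hstart a) (hend a ha) this
  have hle : ∀ a ∈ (Finset.univ : Finset ↥(initialS G)),
      (if a ∈ E then 2 else 0) ≤ (M a).card := by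
    intro a _
    split_ifs with h
    · exact htwo a h
    · exact Nat.zero_le _
  have hEsum : ∑ a : ↥(initialS G), (if a ∈ E then 2 else 0) = 2 * E.card := by
    simp [mul_comm]
  have hbud : 2 * n * (κ - 1) * κ = 2 * (n * (κ - 1) * κ) := by ring
  have heq : ∀ a, (if a ∈ E then 2 else 0) = (M a).card := by
    have h1 : ∑ a : ↥(initialS G), (if a ∈ E then 2 else 0) = ∑ a, (M a).card := by
      refine le_antisymm (Finset.sum_le_sum hle) ?_
      rw [hEsum]; omega
    intro a
    exact (Finset.sum_eq_sum_iff_of_le hle).1 h1 a (Finset.mem_univ a)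
  have hnomove : ∀ a, a ∉ E → M a = ∅ := by
    intro a ha
    have := heq a
    rw [if_neg ha] at this
    exact Finset.card_eq_zero.1 this.symm
  have hstay : ∀ a, M a = ∅ → f m a = a.1 := by
    intro a h
    rw [hconst a 0 m (Nat.zero_le _) le_rfl (by simp [h]), hf0]
  refine ⟨?_, hS3, ?_⟩
  · rintro a ⟨i, hi⟩
    have hiM : i ∈ M a := (hMmem a i).2 hi
    have haE : a ∈ E := by
      by_contra h
      simp [hnomove a h] at hiM
    have hc := heq a
    rw [if_pos haE] at hc
    obtain ⟨u, v, huv, hM⟩ : ∃ u v, u < v ∧ M a = {u, v} := by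
      obtain ⟨u, v, hne, h⟩ := Finset.card_eq_two.1 hc.symm
      rcases lt_or_gt_of_ne hne with h' | h'
      · exact ⟨u, v, h', h⟩
      · exact ⟨v, u, h', by rw [h, Finset.pair_comm]⟩
    refine ⟨u, v, huv, ?_, ?_⟩
    · ext k
      have := hMmem a k
      rw [hM] at this
      simpa using this.symm
    · have hu : u ∈ M a := by simp [hM]
      have hv : v ∈ M a := by simp [hM]
      have hvm := ((hMmem a v).1 hv).1
      have e1 := hconst a 0 u (Nat.zero_le _) (by omega) (by
        intro k _ hk; simp only [hM, Finset.mem_insert, Finset.mem_singleton]; omega)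
      have e2 := hconst a (u + 1) v (by omega) (by omega) (by
        intro k _ hk; simp only [hM, Finset.mem_insert, Finset.mem_singleton]; omega)
      have e3 := hconst a (v + 1) m (by omega) le_rfl (by
        intro k _ hk; simp only [hM, Finset.mem_insert, Finset.mem_singleton]; omega)
      have a1 := hadj a u hu
      have a2 := hadj a v hv
      rw [e1] at a1
      rw [e2, ← e3] at a2
      exact StarsAux.conn_of_adj G _ _ _ (hstart a) (hend a haE) a1 a2
  · intro i
    obtain ⟨x, hx, hx'⟩ := hS2 i
    have hmv : ∀ a : ↥(initialS G), (∃ j p, (a : Node G).1 = PreNode.vleaf i x j p) →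
            ∃ s : ℕ, s < m ∧ f (s + 1) a ≠ f s a := by
      intro a ha
      by_contra hno
      have hMe : M a = ∅ := by
        refine Finset.eq_empty_of_forall_notMem fun s hs => hno ⟨s, (hMmem a s).1 hs⟩
      have hmem : a.1 ∈ vertexGadgetLeaves G i x ∩ T := ⟨ha, hstay a hMe ▸ hTm a⟩
      rw [hx] at hmem
      exact hmem
    refine ⟨x, hmv, ?_, ?_⟩
    · intro a x' hne ha s hs
      by_contra hmove
      have hsM : s ∈ M a := (hMmem a s).2 ⟨hs, hmove⟩
      have haE : a ∈ E := by
        by_contra h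
        simp [hnomove a h] at hsM
      have haT : a.1 ∈ T := hx' x' hne ha
      rw [← hrange] at haT
      obtain ⟨b, hb⟩ := haT
      have hbE : b ∉ E := by
        intro h
        exact (Finset.mem_filter.1 h).2 (by rw [hb]; exact a.2)
      have := hstay b (hnomove b hbE)
      have hba : b = a := Subtype.ext (this.symm.trans hb)
      exact hbE (hba ▸ haE)
    · rw [← StarsAux.gadget_ncard G i x]
      congr 1
      ext a
      exact ⟨fun h => h.1, fun h => ⟨h, hmv a h⟩⟩
end

section
/- If in the graph H of the stars construction some stars solution T is reachable from the initial configuration S within the budget b = 2n(κ−1)κ token slides in the discovery token sliding model, then the Multicolored Clique instance (G, κ) is a yes-instance. -/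
namespace StarsConstruction

/-- Split a token sliding sequence into one walk per token; the lengths add up to
the number of slides. -/
theorem exists_walks {V α : Type*} [Fintype α] (K : SimpleGraph V) (f : ℕ → α → V) :
    ∀ m : ℕ, (∀ i : ℕ, i < m → TokenDiscovery.Step K (f i) (f (i + 1))) →
      ∃ l : α → ℕ, ∑ a, l a = m ∧
        ∀ a, ∃ p : K.Walk (f 0 a) (f m a), p.length = l a := by
  classical
  intro m
  induction m with
  | zero =>
    intro _
    exact ⟨fun _ => 0, by simp, fun a => ⟨SimpleGraph.Walk.nil, rfl⟩⟩
  | succ m ih =>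
    intro hs
    obtain ⟨l, hl, hw⟩ := ih (fun i hi => hs i (by omega))
    obtain ⟨i, hadj, hrest⟩ := hs m (by omega)
    refine ⟨fun a => l a + if a = i then 1 else 0, ?_, ?_⟩
    · rw [Finset.sum_add_distrib, hl]
      simp
    · intro a
      obtain ⟨p, hp⟩ := hw a
      by_cases ha : a = i
      · subst ha
        exact ⟨p.concat hadj, by simp [hp]⟩
      · exact ⟨p.copy rfl (hrest a ha).symm, by simp [hp, ha]⟩

/-- Being a leaf. -/
def IsLeaf {κ n : ℕ} (w : PreNode κ n) : Prop :=
  (∃ i x j p, w = PreNode.vleaf i x j p) ∨ (∃ i j x y s p, w = PreNode.eleaf i j x y s p)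

theorem connFor_not_leaf {κ n : ℕ} (i j : Fin κ) (b : Bool) :
    ¬ IsLeaf (connFor i j b : PreNode κ n) := by
  unfold connFor IsLeaf
  split_ifs <;> simp

theorem rel_not_leaf {κ n : ℕ} {a b : PreNode κ n} (h : Rel a b) : ¬ IsLeaf b := by
  rcases h with ⟨_, _, _, rfl⟩ | ⟨_, _, _, _, _, rfl⟩ | ⟨_, _, _, _, _, _, rfl⟩ |
    ⟨_, _, _, _, _, _, rfl⟩ | ⟨_, _, _, _, _, rfl⟩ | ⟨_, _, _, _, _, _, _, rfl⟩ |
    ⟨_, _, _, _, _, _, _, rfl⟩ | ⟨_, _, _, _, _, _, _, rfl⟩ |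
    ⟨_, _, _, _, _, _, _, rfl⟩ | ⟨_, _, _, _, _, _, _, rfl⟩
  all_goals first
    | exact connFor_not_leaf _ _ _
    | simp [IsLeaf]

theorem adj_leaf {κ n : ℕ} {G : SimpleGraph (Fin κ × Fin n)} {a b : Node G}
    (h : (H G).Adj a b) (ha : IsLeaf a.1) : Rel a.1 b.1 := by
  rw [H, SimpleGraph.fromRel_adj] at h
  rcases h.2 with h | h
  · exact h
  · exact absurd ha (rel_not_leaf h)

theorem rel_vleaf {κ n : ℕ} {i j : Fin κ} {x p : Fin n} {b : PreNode κ n}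
    (h : Rel (PreNode.vleaf i x j p) b) :
    b = PreNode.vroot i x ∨ b = connFor i j (decide ((p : ℕ) ≤ x)) := by
  unfold Rel at h
  simp only [PreNode.vleaf.injEq, reduceCtorEq, false_and, and_false, exists_false, false_or,
    or_false] at h
  rcases h with ⟨_, _, _, _, ⟨rfl, rfl, rfl, rfl⟩, rfl⟩ |
    ⟨_, _, _, _, hp, ⟨rfl, rfl, rfl, rfl⟩, rfl⟩ | ⟨_, _, _, _, hp, ⟨rfl, rfl, rfl, rfl⟩, rfl⟩
  · exact Or.inl rfl
  · right; simp [hp]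
  · right; rw [decide_eq_false (Nat.not_le.mpr hp)]

theorem rel_eleaf {κ n : ℕ} {i j : Fin κ} {x y p : Fin n} {s : Bool} {b : PreNode κ n}
    (h : Rel (PreNode.eleaf i j x y s p) b) :
    b = PreNode.eroot i j x y ∨ (s = false ∧ b = connFor i j (decide ((p : ℕ) ≤ x))) ∨
      (s = true ∧ b = connFor j i (decide ((p : ℕ) ≤ y))) := by
  unfold Rel at h
  simp only [PreNode.eleaf.injEq, reduceCtorEq, false_and, and_false, exists_false, false_or,
    or_false] at h
  rcases h with ⟨_, _, _, _, _, _, ⟨rfl, rfl, rfl, rfl, rfl, rfl⟩, rfl⟩ |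
    ⟨_, _, _, _, _, hp, ⟨rfl, rfl, rfl, rfl, rfl, rfl⟩, rfl⟩ |
    ⟨_, _, _, _, _, hp, ⟨rfl, rfl, rfl, rfl, rfl, rfl⟩, rfl⟩ |
    ⟨_, _, _, _, _, hp, ⟨rfl, rfl, rfl, rfl, rfl, rfl⟩, rfl⟩ |
    ⟨_, _, _, _, _, hp, ⟨rfl, rfl, rfl, rfl, rfl, rfl⟩, rfl⟩
  · exact Or.inl rfl
  · right; simp [hp]
  · right; exact Or.inl ⟨rfl, by rw [decide_eq_false (Nat.not_le.mpr hp)]⟩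
  · right; simp [hp]
  · right; exact Or.inr ⟨rfl, by rw [decide_eq_false (Nat.not_le.mpr hp)]⟩

theorem connFor_inj {κ n : ℕ} {i j i' j' : Fin κ} {b b' : Bool} (h1 : i ≠ j) (h2 : i' ≠ j')
    (h : (connFor i j b : PreNode κ n) = connFor i' j' b') : i = i' ∧ j = j' ∧ b = b' := by
  unfold connFor at h
  split_ifs at h <;> simp at h <;> simp_all

theorem connFor_ne_vroot {κ n : ℕ} {i j i' : Fin κ} {x : Fin n} {b : Bool} :
    (connFor i j b : PreNode κ n) ≠ PreNode.vroot i' x := by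
  unfold connFor
  split_ifs <;> simp

theorem connFor_ne_eroot {κ n : ℕ} {i j i' j' : Fin κ} {x y : Fin n} {b : Bool} :
    (connFor i j b : PreNode κ n) ≠ PreNode.eroot i' j' x y := by
  unfold connFor
  split_ifs <;> simp

/-- Common neighbours of a vertex-gadget leaf and an edge-gadget leaf. -/
theorem common_nbr {κ n : ℕ} {i j i' j' : Fin κ} {x p x' y' q : Fin n} {s : Bool}
    {b : PreNode κ n} (hij : i ≠ j) (hij' : i' ≠ j')
    (h : Rel (PreNode.vleaf i x j p) b) (h' : Rel (PreNode.eleaf i' j' x' y' s q) b) :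
    (s = false ∧ i = i' ∧ j = j' ∧ ((p : ℕ) ≤ x ↔ (q : ℕ) ≤ x')) ∨
      (s = true ∧ i = j' ∧ j = i' ∧ ((p : ℕ) ≤ x ↔ (q : ℕ) ≤ y')) := by
  rcases rel_vleaf h with rfl | rfl <;> rcases rel_eleaf h' with h2 | ⟨hs, h2⟩ | ⟨hs, h2⟩
  · simp at h2
  · exact absurd h2.symm connFor_ne_vroot
  · exact absurd h2.symm connFor_ne_vroot
  · exact absurd h2 connFor_ne_eroot
  · obtain ⟨ha, hb, hc⟩ := connFor_inj hij hij' h2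
    exact Or.inl ⟨hs, ha, hb, by simpa using hc⟩
  · obtain ⟨ha, hb, hc⟩ := connFor_inj hij hij'.symm h2
    exact Or.inr ⟨hs, ha, hb, by simpa using hc⟩

/-- Walks between different leaves have length at least two. -/
theorem two_le_walk {κ n : ℕ} {G : SimpleGraph (Fin κ × Fin n)} {a b : Node G}
    (p : (H G).Walk a b) (ha : IsLeaf a.1) (hb : IsLeaf b.1) (hne : a ≠ b) :
    2 ≤ p.length := by
  by_contra hlt
  have h01 : p.length = 0 ∨ p.length = 1 := by omega
  rcases h01 with h0 | h1
  · exact hne (SimpleGraph.Walk.eq_of_length_eq_zero h0)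
  · exact rel_not_leaf (adj_leaf (SimpleGraph.Walk.adj_of_length_eq_one h1) ha) hb

theorem walk_two {V : Type*} {K : SimpleGraph V} {a b : V} (p : K.Walk a b)
    (h : p.length = 2) : ∃ c, K.Adj a c ∧ K.Adj c b := by
  cases p with
  | nil => simp at h
  | cons h1 q =>
    exact ⟨_, h1, SimpleGraph.Walk.adj_of_length_eq_one (p := q) (by simpa using h)⟩

/-- Indices agree when an injection matches the initial segments. -/
theorem eq_of_inj {n : ℕ} (x y : Fin n) (g : Fin n → Fin n) (hg : Function.Injective g)
    (h : ∀ p : Fin n, ((p : ℕ) ≤ x ↔ (g p : ℕ) ≤ y)) : x = y := by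
  have h1 : ((Finset.Iic x).map ⟨g, hg⟩) = Finset.Iic y := by
    ext q
    obtain ⟨p, rfl⟩ := (Finite.injective_iff_surjective.mp hg) q
    simp only [Finset.mem_map, Finset.mem_Iic, Function.Embedding.coeFn_mk]
    constructor
    · rintro ⟨p', hp', he⟩
      rw [← he]; exact (h p').mp hp'
    · intro hp
      exact ⟨p, (h p).mpr hp, rfl⟩
  have h2 := congrArg Finset.card h1
  rw [Finset.card_map, Fin.card_Iic, Fin.card_Iic] at h2
  exact Fin.ext (by omega)

theorem finite_initialS {κ n : ℕ} (G : SimpleGraph (Fin κ × Fin n)) :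
    Finite ↥(initialS G) := by
  choose i x j p h using fun a : ↥(initialS G) => a.2
  refine Finite.of_injective
    (fun a => ((i a, x a, j a, p a) : Fin κ × Fin n × Fin κ × Fin n)) ?_
  intro a b hab
  simp only [Prod.mk.injEq] at hab
  obtain ⟨h1, h2, h3, h4⟩ := hab
  apply Subtype.ext
  apply Subtype.ext
  rw [h a, h b, h1, h2, h3, h4]

/-- The number of ordered triples of distinct classes and a leaf position. -/
theorem card_triples (κ n : ℕ) :
    Fintype.card ({ij : Fin κ × Fin κ // ij.2 ≠ ij.1} × Fin n) = n * (κ - 1) * κ := by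
  classical
  rw [Fintype.card_prod, Fintype.card_fin, Fintype.card_subtype]
  have : (Finset.univ.filter fun ij : Fin κ × Fin κ => ij.2 ≠ ij.1)
      = (Finset.univ : Finset (Fin κ)).offDiag := by
    ext ⟨a, b⟩
    simp [eq_comm]
  rw [this, Finset.offDiag_card, Finset.card_univ, Fintype.card_fin, ← Nat.sub_one_mul]
  ring

end StarsConstruction

open StarsConstruction in
/-- If in the graph of the stars construction some stars solution is reachable
from the initial configuration within `2n(κ−1)κ` token slides in the discovery
token sliding model, then the Multicolored Clique instance is a yes-instance. -/
theorem mcc_yes_of_stars_solution {κ n : ℕ} (G : SimpleGraph (Fin κ × Fin n))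
    (h : ∃ T : Set (Node G), IsStarsSolution G T ∧
      TokenDiscovery.Reachable (H G) (fun a : ↥(initialS G) => (a : Node G)) T
        (2 * n * (κ - 1) * κ)) :
    MCCYes G := by
  classical
  obtain ⟨T, ⟨-, hS1, hS2, hS3⟩, m, f, hm, hf0, hstep, hinj, hrange⟩ := h
  haveI := finite_initialS G
  letI : Fintype ↥(initialS G) := Fintype.ofFinite _
  obtain ⟨l, hl, hw⟩ := exists_walks (H G) f m hstep
  rw [hf0] at hw
  choose w hwl using hw
  choose v hv hv' using hS2
  have hT : ∀ a, f m a ∈ T := fun a => hrange ▸ Set.mem_range_self a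
  have hleafT : ∀ a, IsLeaf (f m a).1 := fun a => hS1 _ (hT a)
  have hleafS : ∀ a : ↥(initialS G), IsLeaf a.1.1 := fun a => Or.inl a.2
  -- tokens of the emptied gadgets
  let d : {ij : Fin κ × Fin κ // ij.2 ≠ ij.1} × Fin n → ↥(initialS G) := fun t =>
    ⟨⟨PreNode.vleaf t.1.1.1 (v t.1.1.1) t.1.1.2 t.2, t.1.2⟩, ⟨_, _, _, _, rfl⟩⟩
  have hd : Function.Injective d := by
    rintro ⟨⟨⟨i, j⟩, hij⟩, p⟩ ⟨⟨⟨i', j'⟩, hij'⟩, p'⟩ he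
    simp only [d, Subtype.mk.injEq, PreNode.vleaf.injEq] at he
    obtain ⟨rfl, -, rfl, rfl⟩ := he
    rfl
  have hge : ∀ t, 2 ≤ l (d t) := by
    intro t
    rw [← hwl]
    refine two_le_walk _ (hleafS _) (hleafT _) ?_
    intro he
    have h1 : f m (d t) ∈ vertexGadgetLeaves G t.1.1.1 (v t.1.1.1) ∩ T := by
      refine ⟨?_, hT _⟩
      rw [← he]
      exact ⟨_, _, rfl⟩
    rw [hv] at h1
    exact h1
  let D : Finset ↥(initialS G) := Finset.univ.map ⟨d, hd⟩
  have hsplit := Finset.sum_add_sum_compl D l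
  have hsumD : ∑ a ∈ D, l a = ∑ t, l (d t) := by simp [D]
  have hsumge : ∑ t, l (d t) = ∑ t, (l (d t) - 2) + 2 * (n * (κ - 1) * κ) := by
    rw [← card_triples κ n]
    have : ∀ t, l (d t) = (l (d t) - 2) + 2 := fun t => by have := hge t; omega
    conv_lhs => rw [Finset.sum_congr rfl (fun t _ => this t)]
    rw [Finset.sum_add_distrib]
    simp [mul_comm]
  have hm' : m ≤ 2 * (n * (κ - 1) * κ) := by
    refine hm.trans (le_of_eq ?_); ring
  have hz1 : ∑ t, (l (d t) - 2) = 0 := by omega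
  have hz2 : ∑ a ∈ Dᶜ, l a = 0 := by omega
  have heq2 : ∀ t, l (d t) = 2 := by
    intro t
    have := (Finset.sum_eq_zero_iff.mp hz1) t (Finset.mem_univ _)
    have := hge t
    omega
  have hstay : ∀ a, a ∉ D → f m a = a.1 := by
    intro a ha
    have h0 := (Finset.sum_eq_zero_iff.mp hz2) a (Finset.mem_compl.mpr ha)
    exact (SimpleGraph.Walk.eq_of_length_eq_zero ((hwl a).trans h0)).symm
  -- moved tokens end at edge-gadget leaves
  have hend : ∀ t, ∃ i j x y s p, (f m (d t)).1 = PreNode.eleaf i j x y s p := by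
    intro t
    rcases hleafT (d t) with ⟨i, x, j, p, he⟩ | he
    · exfalso
      have hx : x ≠ v i := by
        rintro rfl
        have h1 : f m (d t) ∈ vertexGadgetLeaves G i (v i) ∩ T := ⟨⟨_, _, he⟩, hT _⟩
        rw [hv] at h1
        exact h1
      let a : ↥(initialS G) := ⟨f m (d t), ⟨_, _, _, _, he⟩⟩
      have ha : a ∉ D := by
        intro hmem
        simp only [D, Finset.mem_map, Finset.mem_univ, true_and,
          Function.Embedding.coeFn_mk] at hmem
        obtain ⟨t', ht'⟩ := hmem
        have h1 : (d t').1.1 = PreNode.vleaf i x j p := by rw [ht']; exact he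
        simp only [d, PreNode.vleaf.injEq] at h1
        obtain ⟨h1, h2, -, -⟩ := h1
        exact hx (by rw [← h2, h1])
      have h2 : a = d t := hinj (hstay a ha)
      exact ha (h2 ▸ Finset.mem_map_of_mem _ (Finset.mem_univ t))
    · exact he
  -- where the tokens end
  have hnbr : ∀ (i j : Fin κ) (hji : j ≠ i) (p : Fin n) (i' j' : Fin κ) (x y : Fin n) (s : Bool)
      (q : Fin n), (f m (d (⟨(i, j), hji⟩, p))).1 = PreNode.eleaf i' j' x y s q →
      i' < j' ∧ G.Adj (i', x) (j', y) ∧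
      ((s = false ∧ i = i' ∧ j = j' ∧ ((p : ℕ) ≤ v i ↔ (q : ℕ) ≤ x)) ∨
      (s = true ∧ i = j' ∧ j = i' ∧ ((p : ℕ) ≤ v i ↔ (q : ℕ) ≤ y))) := by
    intro i j hji p i' j' x y s q he
    have hval : Valid G (PreNode.eleaf i' j' x y s q) := he ▸ (f m _).2
    obtain ⟨c, hc1, hc2⟩ := walk_two (w (d (⟨(i, j), hji⟩, p))) ((hwl _).trans (heq2 _))
    have r1 := adj_leaf hc1 (hleafS _)
    have r2 := adj_leaf hc2.symm (hleafT _)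
    rw [he] at r2
    exact ⟨hval.1, hval.2, common_nbr hji.symm hval.1.ne r1 r2⟩
  refine ⟨v, ?_⟩
  have key : ∀ i j : Fin κ, i < j → G.Adj (i, v i) (j, v j) := by
    intro i j hij
    obtain ⟨x, y, hxy, -, huniq⟩ := hS3 i j hij
    have hu : ∀ (a : ↥(initialS G)) (x' y' : Fin n) (s : Bool) (q : Fin n),
        (f m a).1 = PreNode.eleaf i j x' y' s q → G.Adj (i, x') (j, y') → x' = x ∧ y' = y := by
      intro a x' y' s q he hadj
      by_contra hne
      have h1 := huniq x' y' hadj (fun h => hne (Prod.mk.inj h))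
      have h2 : f m a ∈ edgeGadgetLeaves G i j x' y' ∩ T := ⟨⟨_, _, he⟩, hT _⟩
      rw [h1] at h2
      exact h2
    have hA : ∀ p : Fin n, ∃ q : Fin n,
        (f m (d (⟨(i, j), hij.ne'⟩, p))).1 = PreNode.eleaf i j x y false q ∧
          ((p : ℕ) ≤ v i ↔ (q : ℕ) ≤ x) := by
      intro p
      obtain ⟨i', j', x', y', s, q, he⟩ := hend (⟨(i, j), hij.ne'⟩, p)
      obtain ⟨hlt, hadj, ⟨rfl, rfl, rfl, hiff⟩ | ⟨rfl, rfl, rfl, hiff⟩⟩ :=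
        hnbr _ _ _ _ _ _ _ _ _ _ he
      · obtain ⟨rfl, rfl⟩ := hu _ _ _ _ _ he hadj
        exact ⟨q, he, hiff⟩
      · exact absurd hlt hij.asymm
    have hB : ∀ p : Fin n, ∃ q : Fin n,
        (f m (d (⟨(j, i), hij.ne⟩, p))).1 = PreNode.eleaf i j x y true q ∧
          ((p : ℕ) ≤ v j ↔ (q : ℕ) ≤ y) := by
      intro p
      obtain ⟨i', j', x', y', s, q, he⟩ := hend (⟨(j, i), hij.ne⟩, p)
      obtain ⟨hlt, hadj, ⟨rfl, rfl, rfl, hiff⟩ | ⟨rfl, rfl, rfl, hiff⟩⟩ :=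
        hnbr _ _ _ _ _ _ _ _ _ _ he
      · exact absurd hlt hij.asymm
      · obtain ⟨rfl, rfl⟩ := hu _ _ _ _ _ he hadj
        exact ⟨q, he, hiff⟩
    choose gA hgA hgA' using hA
    choose gB hgB hgB' using hB
    have eA : v i = x := by
      refine eq_of_inj _ _ gA ?_ hgA'
      intro p p' hp
      have := hd (hinj (Subtype.ext ((hgA p).trans ((congrArg _ hp).trans (hgA p').symm))))
      exact (Prod.mk.inj this).2
    have eB : v j = y := by
      refine eq_of_inj _ _ gB ?_ hgB'
      intro p p' hp
      have := hd (hinj (Subtype.ext ((hgB p).trans ((congrArg _ hp).trans (hgB p').symm))))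
      exact (Prod.mk.inj this).2
    rw [eA, eB]
    exact hxy
  intro i j hij
  rcases lt_or_gt_of_ne hij with hlt | hlt
  · exact key i j hlt
  · exact (key j i hlt).symm
end

section
/- For the graph H of the paths construction obtained from a Multicolored Clique instance (G, κ), the modulator to paths number satisfies mp(H) ≤ 5·(κ choose 2) + κ; indeed, the set consisting of all green connector nodes, all gray edge block nodes, and all teal vertex block nodes is a modulator to paths of H. -/
namespace PathsConstruction

/-- Pre-nodes of the paths construction obtained from a Multicolored Clique
instance with `κ` color classes of `n` vertices each.  The vertex `x` of class
`i` is the pair `(i, x) : Fin κ × Fin n`, and its index is `ι(i, x) = x + 1`. -/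
inductive PreNode (κ n : ℕ) : Type
  /-- the teal vertex block node `b_i` -/
  | vblock (i : Fin κ)
  /-- the `p`-th node (for `p < n(κ−1)`) of the path vertex-gadget for `(i, x)` -/
  | vnode (i : Fin κ) (x : Fin n) (p : ℕ)
  /-- the gray edge block node `b_{i,j}` (for `i < j`) -/
  | eblock (i j : Fin κ)
  /-- the `p`-th node (for `p < 2n`) of the path edge-gadget for the edge `(i,x)(j,y)` -/
  | enode (i j : Fin κ) (x y : Fin n) (p : ℕ)
  /-- green connector node for the pair `{i, j}` (with `i < j`); `fromSecond`
  tells whether it is the connector from color `j` (rather than from color `i`),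
  and `isIndex` whether it is the index (rather than the remainder) connector -/
  | conn (i j : Fin κ) (fromSecond : Bool) (isIndex : Bool)

variable {κ n : ℕ}

/-- The index (`isIndex = true`) or remainder (`isIndex = false`) connector
node from color `i` to the pair `{i, j}`. -/
def connFor (i j : Fin κ) (isIndex : Bool) : PreNode κ n :=
  if i < j then PreNode.conn i j false isIndex else PreNode.conn j i true isIndex

variable (G : SimpleGraph (Fin κ × Fin n))

/-- The pre-nodes actually present in the paths construction for the
Multicolored Clique instance `G`. -/
def Valid : PreNode κ n → Prop
  | PreNode.vblock _ => True
  | PreNode.vnode _ _ p => p < n * (κ - 1)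
  | PreNode.eblock i j => i < j
  | PreNode.enode i j x y p => i < j ∧ G.Adj (i, x) (j, y) ∧ p < 2 * n
  | PreNode.conn i j _ _ => i < j

/-- Nodes of the paths construction. -/
abbrev Node := {w : PreNode κ n // Valid G w}

/-- The class corresponding to the `g`-th group (0-based) of a path
vertex-gadget of the vertex-block for `i`: the groups enumerate the classes
different from `i` in increasing order. -/
def classOfGroup (i : Fin κ) (g : ℕ) : ℕ := if g < (i : ℕ) then g else g + 1

/-- The base adjacency relation of the paths construction (to be symmetrized).
Within the group of a path vertex-gadget (or the half of a path edge-gadget)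
corresponding to a vertex of index `ι = x + 1`, the first `ι` nodes go to the
index connector and the remaining `n − ι` nodes go to the remainder
connector. -/
def Rel : PreNode κ n → PreNode κ n → Prop := fun a b =>
  (∃ i x p, a = PreNode.vnode i x p ∧ b = PreNode.vnode i x (p + 1)) ∨
  (∃ i x p, a = PreNode.vnode i x p ∧ b = PreNode.vblock i) ∨
  (∃ (i : Fin κ) (x : Fin n) (p : ℕ) (j : Fin κ), (j : ℕ) = classOfGroup i (p / n) ∧
      p % n ≤ (x : ℕ) ∧ a = PreNode.vnode i x p ∧ b = connFor i j true) ∨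
  (∃ (i : Fin κ) (x : Fin n) (p : ℕ) (j : Fin κ), (j : ℕ) = classOfGroup i (p / n) ∧
      (x : ℕ) < p % n ∧ a = PreNode.vnode i x p ∧ b = connFor i j false) ∨
  (∃ i j x y p, a = PreNode.enode i j x y p ∧ b = PreNode.enode i j x y (p + 1)) ∨
  (∃ i j x y p, a = PreNode.enode i j x y p ∧ b = PreNode.eblock i j) ∨
  (∃ (i j : Fin κ) (x y : Fin n) (p : ℕ), p ≤ (x : ℕ) ∧
      a = PreNode.enode i j x y p ∧ b = connFor i j true) ∨
  (∃ (i j : Fin κ) (x y : Fin n) (p : ℕ), (x : ℕ) < p ∧ p < n ∧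
      a = PreNode.enode i j x y p ∧ b = connFor i j false) ∨
  (∃ (i j : Fin κ) (x y : Fin n) (p : ℕ), n ≤ p ∧ p - n ≤ (y : ℕ) ∧
      a = PreNode.enode i j x y p ∧ b = connFor j i true) ∨
  (∃ (i j : Fin κ) (x y : Fin n) (p : ℕ), n ≤ p ∧ (y : ℕ) < p - n ∧
      a = PreNode.enode i j x y p ∧ b = connFor j i false)

/-- The graph `H` of the paths construction. -/
def H : SimpleGraph (Node G) := SimpleGraph.fromRel (fun a b => Rel a.1 b.1)

/-- The initial configuration: all nodes of all path vertex-gadgets. -/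
def initialS : Set (Node G) := {w | ∃ i x p, w.1 = PreNode.vnode i x p}

/-- The nodes of the path vertex-gadget for the vertex `(i, x)`. -/
def vertexGadgetNodes (i : Fin κ) (x : Fin n) : Set (Node G) :=
  {w | ∃ p, w.1 = PreNode.vnode i x p}

/-- The nodes of the path edge-gadget for the edge `(i,x)(j,y)`. -/
def edgeGadgetNodes (i j : Fin κ) (x y : Fin n) : Set (Node G) :=
  {w | ∃ p, w.1 = PreNode.enode i j x y p}

/-- The gadget nodes: the nodes of all path vertex-gadgets and path
edge-gadgets (that is, all non-block non-connector nodes). -/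
def gadgetNodes : Set (Node G) :=
  {w | (∃ i x p, w.1 = PreNode.vnode i x p) ∨ ∃ i j x y p, w.1 = PreNode.enode i j x y p}

/-- A paths solution: a set `T` of nodes with `|T| = |S|` satisfying
conditions (P1)–(P4). -/
def IsPathsSolution (T : Set (Node G)) : Prop :=
  T.ncard = (initialS G).ncard ∧
  -- (P1): no block or connector node is in `T`
  (∀ w ∈ T, w ∈ gadgetNodes G) ∧
  -- (P2): for each `i`, some node of a path vertex-gadget adjacent to `b_i`
  -- is not in `T`
  (∀ i : Fin κ, ∃ w : Node G, (∃ x p, w.1 = PreNode.vnode i x p) ∧ w ∉ T) ∧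
  -- (P3): for each pair `{i,j}`, some node of a path edge-gadget adjacent to
  -- `b_{i,j}` is in `T`
  (∀ i j : Fin κ, i < j → ∃ w : Node G, (∃ x y p, w.1 = PreNode.enode i j x y p) ∧ w ∈ T) ∧
  -- (P4): a gadget node is in `T` iff every gadget node at distance at most
  -- two from it in the subgraph induced by the gadget nodes is in `T`
  (∀ a : ↥(gadgetNodes G), (a : Node G) ∈ T ↔
      ∀ b : ↥(gadgetNodes G),
        (∃ pw : (SimpleGraph.induce (gadgetNodes G) (H G)).Walk a b, pw.length ≤ 2) →
        (b : Node G) ∈ T)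

/-- The Multicolored Clique instance is a yes-instance: there is a clique of
`G` with exactly one vertex from each color class. -/
def MCCYes : Prop :=
  ∃ f : Fin κ → Fin n, ∀ i j : Fin κ, i ≠ j → G.Adj (i, f i) (j, f j)

end PathsConstruction

/-- Every connected component of `K` is a path. -/
def ComponentsArePaths {W : Type*} (K : SimpleGraph W) : Prop :=
  ∀ C : K.ConnectedComponent, ∃ (N : ℕ) (g : Fin N ≃ C.supp),
    ∀ a b : Fin N, K.Adj (g a : W) (g b : W) ↔ ((a : ℕ) + 1 = (b : ℕ) ∨ (b : ℕ) + 1 = (a : ℕ))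

/-- `X` is a modulator to paths of `K`: every connected component of `K − X`
is a path. -/
def IsPathsModulator {W : Type*} (K : SimpleGraph W) (X : Set W) : Prop :=
  ComponentsArePaths (SimpleGraph.induce Xᶜ K)

/-- The modulator to paths number: the minimum size of a modulator to paths. -/
noncomputable def pathsModulatorNumber {W : Type*} (K : SimpleGraph W) : ℕ :=
  sInf {k | ∃ X : Set W, IsPathsModulator K X ∧ X.ncard = k}


theorem componentsArePaths_of_cover {W : Type*} (K : SimpleGraph W)
    (h : ∀ w : W, ∃ (N : ℕ) (f : Fin N → W), Function.Injective f ∧ w ∈ Set.range f ∧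
      (∀ a b : Fin N, K.Adj (f a) (f b) ↔ ((a : ℕ) + 1 = (b : ℕ) ∨ (b : ℕ) + 1 = (a : ℕ))) ∧
      (∀ (a : Fin N) (v : W), K.Adj (f a) v → v ∈ Set.range f)) :
    ComponentsArePaths K := by
  intro C
  induction C using SimpleGraph.ConnectedComponent.ind with
  | h w =>
    obtain ⟨N, f, hinj, ⟨c, hc⟩, hadj, hcl⟩ := h w
    have hN : 0 < N := lt_of_le_of_lt (Nat.zero_le _) c.2
    have hreach0 : ∀ (m : ℕ) (hm : m < N), K.Reachable (f ⟨0, hN⟩) (f ⟨m, hm⟩) := by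
      intro m
      induction m with
      | zero => intro hm; exact SimpleGraph.Reachable.refl _
      | succ m ih =>
        intro hm
        refine (ih (by omega)).trans (SimpleGraph.Adj.reachable ?_)
        rw [hadj]; left; rfl
    have hreach : ∀ a : Fin N, K.Reachable (f a) w := by
      intro a
      rw [← hc]
      exact (hreach0 a.1 a.2).symm.trans (hreach0 c.1 c.2)
    have hwalk : ∀ {u v : W} (_ : K.Walk u v), u ∈ Set.range f → v ∈ Set.range f := by
      intro u v p
      induction p with
      | nil => exact id
      | cons hh _ ih =>
        rintro ⟨a, rfl⟩
        exact ih (hcl a _ hh)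
    let g : Fin N → (K.connectedComponentMk w).supp := fun a =>
      ⟨f a, SimpleGraph.ConnectedComponent.sound (hreach a)⟩
    have hg : Function.Bijective g := by
      constructor
      · intro a b hab
        exact hinj (congrArg Subtype.val hab)
      · rintro ⟨v, hv⟩
        have hr : K.Reachable v w := SimpleGraph.ConnectedComponent.exact hv
        obtain ⟨p⟩ := hr.symm
        obtain ⟨a, ha⟩ := hwalk p ⟨c, hc⟩
        exact ⟨a, Subtype.ext ha⟩
    exact ⟨N, Equiv.ofBijective g hg, fun a b => hadj a b⟩

namespace PathsConstruction

theorem connFor_eq {κ n : ℕ} (i j : Fin κ) (t : Bool) :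
    ∃ a b s, (connFor i j t : PreNode κ n) = PreNode.conn a b s t := by
  unfold connFor
  split
  · exact ⟨_, _, _, rfl⟩
  · exact ⟨_, _, _, rfl⟩

theorem connFor_ne_vnode {κ n : ℕ} (i j : Fin κ) (t : Bool) (a : Fin κ) (x : Fin n) (p : ℕ) :
    PreNode.vnode a x p ≠ (connFor i j t : PreNode κ n) := by
  obtain ⟨_, _, _, h⟩ := connFor_eq (n := n) i j t
  rw [h]; simp

theorem connFor_ne_enode {κ n : ℕ} (i j : Fin κ) (t : Bool) (a b : Fin κ) (x y : Fin n) (p : ℕ) :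
    PreNode.enode a b x y p ≠ (connFor i j t : PreNode κ n) := by
  obtain ⟨_, _, _, h⟩ := connFor_eq (n := n) i j t
  rw [h]; simp

theorem rel_vnode_vnode {κ n : ℕ} (i j : Fin κ) (x y : Fin n) (p q : ℕ) :
    Rel (PreNode.vnode i x p) (PreNode.vnode j y q) ↔ i = j ∧ x = y ∧ p + 1 = q := by
  simp only [Rel, connFor_ne_vnode]
  simp
  grind

theorem rel_enode_enode {κ n : ℕ} (i j i' j' : Fin κ) (x y x' y' : Fin n) (p q : ℕ) :
    Rel (PreNode.enode i j x y p) (PreNode.enode i' j' x' y' q) ↔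
      i = i' ∧ j = j' ∧ x = x' ∧ y = y' ∧ p + 1 = q := by
  simp only [Rel, connFor_ne_enode]
  simp
  grind

theorem not_rel_vnode_enode {κ n : ℕ} (i i' j' : Fin κ) (x x' y' : Fin n) (p q : ℕ) :
    ¬ Rel (PreNode.vnode i x p) (PreNode.enode i' j' x' y' q) := by
  simp [Rel, connFor_ne_enode]

theorem not_rel_enode_vnode {κ n : ℕ} (i i' j' : Fin κ) (x x' y' : Fin n) (p q : ℕ) :
    ¬ Rel (PreNode.enode i' j' x' y' q) (PreNode.vnode i x p) := by
  simp [Rel, connFor_ne_vnode]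

theorem modulator {κ n : ℕ} (G : SimpleGraph (Fin κ × Fin n)) :
    IsPathsModulator (H G)
      {w : Node G | (∃ i j s k, w.1 = PreNode.conn i j s k) ∨
        (∃ i j, w.1 = PreNode.eblock i j) ∨ (∃ i, w.1 = PreNode.vblock i)} := by
  apply componentsArePaths_of_cover
  rintro ⟨⟨w, hv⟩, hw⟩
  cases w with
  | vblock i => exact absurd (Or.inr (Or.inr ⟨i, rfl⟩)) hw
  | eblock i j => exact absurd (Or.inr (Or.inl ⟨i, j, rfl⟩)) hw
  | conn i j s k => exact absurd (Or.inl ⟨i, j, s, k, rfl⟩) hw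
  | vnode i x p =>
    refine ⟨n * (κ - 1), fun a => ⟨⟨PreNode.vnode i x a, a.2⟩, by simp⟩, ?_, ⟨⟨p, hv⟩, rfl⟩, ?_, ?_⟩
    · intro a b hab
      have h1 : (PreNode.vnode i x a : PreNode κ n) = PreNode.vnode i x b :=
        congrArg (fun w => w.1.1) hab
      simp at h1
      exact Fin.ext (by omega)
    · intro a b
      simp only [SimpleGraph.induce_adj, H, SimpleGraph.fromRel_adj, rel_vnode_vnode]
      constructor
      · rintro ⟨_, h | h⟩
        · exact Or.inl (by simpa using h)
        · exact Or.inr (by simpa using h)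
      · intro h
        refine ⟨fun hab => ?_, by simpa using h⟩
        have h1 : (PreNode.vnode i x a : PreNode κ n) = PreNode.vnode i x b := congrArg (fun w => w.1) hab
        simp only [PreNode.vnode.injEq] at h1
        omega
    · rintro a ⟨⟨v, hv'⟩, hv''⟩ hadj
      simp only [SimpleGraph.induce_adj, H, SimpleGraph.fromRel_adj] at hadj
      cases v with
      | vblock i => exact absurd (Or.inr (Or.inr ⟨i, rfl⟩)) hv''
      | eblock i j => exact absurd (Or.inr (Or.inl ⟨i, j, rfl⟩)) hv''
      | conn i j s k => exact absurd (Or.inl ⟨i, j, s, k, rfl⟩) hv''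
      | enode i j x y q => simp [not_rel_vnode_enode, not_rel_enode_vnode] at hadj
      | vnode j y q =>
        simp only [rel_vnode_vnode] at hadj
        obtain ⟨rfl, rfl⟩ : i = j ∧ x = y := by grind
        exact ⟨⟨q, hv'⟩, rfl⟩
  | enode i j x y p =>
    refine ⟨2 * n, fun a => ⟨⟨PreNode.enode i j x y a, hv.1, hv.2.1, a.2⟩, by simp⟩, ?_,
      ⟨⟨p, hv.2.2⟩, rfl⟩, ?_, ?_⟩
    · intro a b hab
      have h1 : (PreNode.enode i j x y a : PreNode κ n) = PreNode.enode i j x y b :=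
        congrArg (fun w => w.1.1) hab
      simp at h1
      exact Fin.ext (by omega)
    · intro a b
      simp only [SimpleGraph.induce_adj, H, SimpleGraph.fromRel_adj, rel_enode_enode]
      constructor
      · rintro ⟨_, h | h⟩
        · exact Or.inl (by simpa using h)
        · exact Or.inr (by simpa using h)
      · intro h
        refine ⟨fun hab => ?_, by simpa using h⟩
        have h1 : (PreNode.enode i j x y a : PreNode κ n) = PreNode.enode i j x y b := congrArg (fun w => w.1) hab
        simp only [PreNode.enode.injEq] at h1
        omega
    · rintro a ⟨⟨v, hv'⟩, hv''⟩ hadj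
      simp only [SimpleGraph.induce_adj, H, SimpleGraph.fromRel_adj] at hadj
      cases v with
      | vblock i => exact absurd (Or.inr (Or.inr ⟨i, rfl⟩)) hv''
      | eblock i j => exact absurd (Or.inr (Or.inl ⟨i, j, rfl⟩)) hv''
      | conn i j s k => exact absurd (Or.inl ⟨i, j, s, k, rfl⟩) hv''
      | vnode j y q => simp [not_rel_vnode_enode, not_rel_enode_vnode] at hadj
      | enode i' j' x' y' q =>
        simp only [rel_enode_enode] at hadj
        obtain ⟨rfl, rfl, rfl, rfl⟩ : i = i' ∧ j = j' ∧ x = x' ∧ y = y' := by grind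
        exact ⟨⟨q, hv'.2.2⟩, rfl⟩

theorem card_pairs_le (κ : ℕ) :
    Fintype.card {p : Fin κ × Fin κ // p.1 < p.2} ≤ Nat.choose κ 2 := by
  have h : (Finset.univ : Finset {p : Fin κ × Fin κ // p.1 < p.2}).card ≤
      (Finset.powersetCard 2 (Finset.univ : Finset (Fin κ))).card := by
    apply Finset.card_le_card_of_injOn (fun p => {p.1.1, p.1.2})
    · intro p _
      simp [Finset.mem_powersetCard, Finset.card_pair p.2.ne]
    · rintro ⟨⟨a, b⟩, hab⟩ _ ⟨⟨c, d⟩, hcd⟩ _ h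
      have h1 := fun z => Finset.ext_iff.1 h z
      simp only [Finset.mem_insert, Finset.mem_singleton] at h1
      have ha := (h1 a).1 (Or.inl rfl)
      have hb := (h1 b).1 (Or.inr rfl)
      have hc := (h1 c).2 (Or.inl rfl)
      have hd := (h1 d).2 (Or.inr rfl)
      change a < b at hab
      change c < d at hcd
      simp only [Subtype.mk.injEq, Prod.mk.injEq, Fin.ext_iff, Fin.lt_def] at *
      omega
  simpa using h

/-- Enumeration of the block and connector nodes. -/
def enumX {κ n : ℕ} (G : SimpleGraph (Fin κ × Fin n)) :
    ({p : Fin κ × Fin κ // p.1 < p.2} × Option (Bool × Bool)) ⊕ Fin κ → Node G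
  | Sum.inl (p, none) => ⟨PreNode.eblock p.1.1 p.1.2, p.2⟩
  | Sum.inl (p, some (s, k)) => ⟨PreNode.conn p.1.1 p.1.2 s k, p.2⟩
  | Sum.inr i => ⟨PreNode.vblock i, trivial⟩

theorem ncard_modulator_le {κ n : ℕ} (G : SimpleGraph (Fin κ × Fin n)) :
    Set.ncard {w : Node G | (∃ i j s k, w.1 = PreNode.conn i j s k) ∨
        (∃ i j, w.1 = PreNode.eblock i j) ∨ (∃ i, w.1 = PreNode.vblock i)} ≤
      5 * Nat.choose κ 2 + κ := by
  have hsub : {w : Node G | (∃ i j s k, w.1 = PreNode.conn i j s k) ∨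
        (∃ i j, w.1 = PreNode.eblock i j) ∨ (∃ i, w.1 = PreNode.vblock i)} ⊆
        enumX G '' Set.univ := by
    rintro ⟨w, hv⟩ (⟨i, j, s, k, rfl⟩ | ⟨i, j, rfl⟩ | ⟨i, rfl⟩)
    · exact ⟨Sum.inl (⟨(i, j), hv⟩, some (s, k)), trivial, rfl⟩
    · exact ⟨Sum.inl (⟨(i, j), hv⟩, none), trivial, rfl⟩
    · exact ⟨Sum.inr i, trivial, rfl⟩
  refine (Set.ncard_le_ncard hsub (Set.toFinite _)).trans
    ((Set.ncard_image_le Set.finite_univ).trans ?_)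
  rw [Set.ncard_univ, Nat.card_eq_fintype_card]
  have h := card_pairs_le κ
  simp only [Fintype.card_sum, Fintype.card_prod, Fintype.card_option, Fintype.card_bool,
    Fintype.card_fin]
  omega

end PathsConstruction

open PathsConstruction in
/-- For the graph `H` of the paths construction, the set of all green
connector nodes, gray edge block nodes and teal vertex block nodes is a
modulator to paths; consequently `mp(H) ≤ 5·(κ choose 2) + κ`. -/
theorem paths_modulator_number_le {κ n : ℕ} (G : SimpleGraph (Fin κ × Fin n)) :
    IsPathsModulator (H G)
      {w : Node G | (∃ i j s k, w.1 = PreNode.conn i j s k) ∨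
        (∃ i j, w.1 = PreNode.eblock i j) ∨ (∃ i, w.1 = PreNode.vblock i)} ∧
    pathsModulatorNumber (H G) ≤ 5 * Nat.choose κ 2 + κ := by
  refine ⟨modulator G, le_trans ?_ (ncard_modulator_le G)⟩
  apply Nat.sInf_le
  exact ⟨_, modulator G, rfl⟩
end

section
/- Let T be a paths solution in the graph H of the paths construction and let a transformation sequence of at most b = 2n(κ−1)κ token slides in the discovery token sliding model move the initial configuration S to T. Then: (i) every token that moves performs exactly two token slides and its intermediate vertex is a green connector node; (ii) for each edge-block, T contains all 2n nodes of exactly one edge-gadget of that block; (iii) for each vertex-block, exactly n(κ−1) tokens slide out of the block, all coming from exactly one vertex-gadget of that block. -/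
namespace PathsConstruction

variable {κ n : ℕ} (G : SimpleGraph (Fin κ × Fin n))

theorem const_between {V : Type*} (g : ℕ → V) (p q : ℕ) (hpq : p ≤ q)
    (h : ∀ s, p ≤ s → s < q → g (s + 1) = g s) : g q = g p := by
  induction q, hpq using Nat.le_induction with
  | base => rfl
  | succ q hpq ih =>
    rw [h q hpq (Nat.lt_succ_self q)]
    exact ih (fun s h1 h2 => h s h1 (by omega))

/-- The connector predicate. -/
def IsConn (w : PreNode κ n) : Prop := ∃ c d s k, w = PreNode.conn c d s k

theorem isConn_connFor (i j : Fin κ) (b : Bool) : IsConn (connFor (n := n) i j b) := by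
  unfold connFor IsConn
  split_ifs
  · exact ⟨_, _, _, _, rfl⟩
  · exact ⟨_, _, _, _, rfl⟩

theorem rel_vnode_left {i : Fin κ} {x : Fin n} {p : ℕ} {w : PreNode κ n}
    (h : Rel (PreNode.vnode i x p) w) :
    w = PreNode.vnode i x (p + 1) ∨ w = PreNode.vblock i ∨ IsConn w := by
  rcases h with h | h | h | h | h | h | h | h | h | h
  · obtain ⟨_, _, _, h1, h2⟩ := h
    cases h1; exact Or.inl h2
  · obtain ⟨_, _, _, h1, h2⟩ := h
    cases h1; exact Or.inr (Or.inl h2)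
  · obtain ⟨_, _, _, _, _, _, h1, rfl⟩ := h
    exact Or.inr (Or.inr (isConn_connFor _ _ _))
  · obtain ⟨_, _, _, _, _, _, h1, rfl⟩ := h
    exact Or.inr (Or.inr (isConn_connFor _ _ _))
  · obtain ⟨_, _, _, _, _, h1, h2⟩ := h
    cases h1
  · obtain ⟨_, _, _, _, _, h1, h2⟩ := h
    cases h1
  · obtain ⟨_, _, _, _, _, _, h1, rfl⟩ := h
    cases h1
  · obtain ⟨_, _, _, _, _, _, _, h1, rfl⟩ := h
    cases h1
  · obtain ⟨_, _, _, _, _, _, _, h1, rfl⟩ := h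
    cases h1
  · obtain ⟨_, _, _, _, _, _, _, h1, rfl⟩ := h
    cases h1

theorem rel_enode_left {i j : Fin κ} {x y : Fin n} {p : ℕ} {w : PreNode κ n}
    (h : Rel (PreNode.enode i j x y p) w) :
    w = PreNode.enode i j x y (p + 1) ∨ w = PreNode.eblock i j ∨ IsConn w := by
  rcases h with h | h | h | h | h | h | h | h | h | h
  · obtain ⟨_, _, _, h1, h2⟩ := h
    cases h1
  · obtain ⟨_, _, _, h1, h2⟩ := h
    cases h1
  · obtain ⟨_, _, _, _, _, _, h1, rfl⟩ := h
    cases h1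
  · obtain ⟨_, _, _, _, _, _, h1, rfl⟩ := h
    cases h1
  · obtain ⟨_, _, _, _, _, h1, h2⟩ := h
    cases h1; exact Or.inl h2
  · obtain ⟨_, _, _, _, _, h1, h2⟩ := h
    cases h1; exact Or.inr (Or.inl h2)
  all_goals
    obtain ⟨_, _, _, _, _, h⟩ := h
    refine Or.inr (Or.inr ?_)
    first
      | (obtain ⟨_, h1, rfl⟩ := h; exact isConn_connFor _ _ _)
      | (obtain ⟨_, _, h1, rfl⟩ := h; exact isConn_connFor _ _ _)

theorem rel_right_gadget {u w : PreNode κ n} (h : Rel u w) :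
    (∀ i x p, w = PreNode.vnode i x p → ∃ q, u = PreNode.vnode i x q) ∧
    (∀ i j x y p, w = PreNode.enode i j x y p → ∃ q, u = PreNode.enode i j x y q) := by
  cases u with
  | vnode i x p =>
    rcases rel_vnode_left h with rfl | rfl | ⟨_, _, _, _, rfl⟩
    · refine ⟨fun _ _ _ h => ?_, fun _ _ _ _ _ h => ?_⟩
      · cases h; exact ⟨_, rfl⟩
      · cases h
    · exact ⟨fun _ _ _ h => (by cases h), fun _ _ _ _ _ h => (by cases h)⟩
    · exact ⟨fun _ _ _ h => (by cases h), fun _ _ _ _ _ h => (by cases h)⟩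
  | enode i j x y p =>
    rcases rel_enode_left h with rfl | rfl | ⟨_, _, _, _, rfl⟩
    · refine ⟨fun _ _ _ h => ?_, fun _ _ _ _ _ h => ?_⟩
      · cases h
      · cases h; exact ⟨_, rfl⟩
    · exact ⟨fun _ _ _ h => (by cases h), fun _ _ _ _ _ h => (by cases h)⟩
    · exact ⟨fun _ _ _ h => (by cases h), fun _ _ _ _ _ h => (by cases h)⟩
  | _ => simp [Rel] at h

theorem adj_vnode {a w : Node G} {i : Fin κ} {x : Fin n} {p : ℕ}
    (ha : a.1 = PreNode.vnode i x p) (h : (H G).Adj a w) :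
    (∃ q, w.1 = PreNode.vnode i x q) ∨ w.1 = PreNode.vblock i ∨ IsConn w.1 := by
  rw [H, SimpleGraph.fromRel_adj] at h
  rcases h.2 with h | h
  · rw [ha] at h
    rcases rel_vnode_left h with h | h
    · exact Or.inl ⟨_, h⟩
    · exact Or.inr h
  · exact Or.inl ((rel_right_gadget h).1 _ _ _ ha)

theorem adj_enode {a w : Node G} {i j : Fin κ} {x y : Fin n} {p : ℕ}
    (ha : a.1 = PreNode.enode i j x y p) (h : (H G).Adj a w) :
    (∃ q, w.1 = PreNode.enode i j x y q) ∨ w.1 = PreNode.eblock i j ∨ IsConn w.1 := by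
  rw [H, SimpleGraph.fromRel_adj] at h
  rcases h.2 with h | h
  · rw [ha] at h
    rcases rel_enode_left h with h | h
    · exact Or.inl ⟨_, h⟩
    · exact Or.inr h
  · exact Or.inl ((rel_right_gadget h).2 _ _ _ _ _ ha)

theorem common_conn {a b w : Node G} {i : Fin κ} {x : Fin n} {p : ℕ}
    {i' j' : Fin κ} {x' y' : Fin n} {p' : ℕ}
    (ha : a.1 = PreNode.vnode i x p) (hb : b.1 = PreNode.enode i' j' x' y' p')
    (h1 : (H G).Adj a w) (h2 : (H G).Adj w b) : IsConn w.1 := by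
  rcases adj_vnode G ha h1 with ⟨q, h⟩ | h | h
  · rcases adj_enode G hb h2.symm with ⟨q', h'⟩ | h' | h'
    · rw [h] at h'; cases h'
    · rw [h] at h'; cases h'
    · exact h'
  · rcases adj_enode G hb h2.symm with ⟨q', h'⟩ | h' | h'
    · rw [h] at h'; cases h'
    · rw [h] at h'; cases h'
    · exact h'
  · exact h

theorem not_adj_vnode_enode {a b : Node G} {i : Fin κ} {x : Fin n} {p : ℕ}
    {i' j' : Fin κ} {x' y' : Fin n} {p' : ℕ}
    (ha : a.1 = PreNode.vnode i x p) (hb : b.1 = PreNode.enode i' j' x' y' p') :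
    ¬ (H G).Adj a b := by
  intro h
  rcases adj_vnode G ha h with ⟨q, h⟩ | h | ⟨_, _, _, _, h⟩ <;>
  · rw [h] at hb; cases hb

variable {G} in
theorem T_adj {T : Set (Node G)} (hT : IsPathsSolution G T) {a b : Node G}
    (ha : a ∈ gadgetNodes G) (hb : b ∈ gadgetNodes G) (hab : (H G).Adj a b) (h : a ∈ T) :
    b ∈ T := by
  refine (hT.2.2.2.2 ⟨a, ha⟩).1 h ⟨b, hb⟩ ⟨SimpleGraph.Walk.cons ?_ SimpleGraph.Walk.nil, ?_⟩
  · exact hab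
  · exact Nat.le_succ 1

variable {G} in
theorem T_vnode {T : Set (Node G)} (hT : IsPathsSolution G T) {i : Fin κ} {x : Fin n} {p q : ℕ}
    (hp : Valid G (PreNode.vnode i x p)) (hq : Valid G (PreNode.vnode i x q)) :
    (⟨_, hp⟩ : Node G) ∈ T ↔ (⟨_, hq⟩ : Node G) ∈ T := by
  have key : ∀ (q : ℕ) (hq : Valid G (PreNode.vnode i x q)),
      (⟨_, hq⟩ : Node G) ∈ T ↔
        (⟨PreNode.vnode i x 0, Nat.lt_of_le_of_lt (Nat.zero_le q) hq⟩ : Node G) ∈ T := by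
    intro q
    induction q with
    | zero => intro hq; rfl
    | succ q ih =>
      intro hq
      have hq' : Valid G (PreNode.vnode i x q) := Nat.lt_of_succ_lt hq
      rw [← ih hq']
      have hadj : (H G).Adj ⟨_, hq'⟩ ⟨_, hq⟩ := by
        rw [H, SimpleGraph.fromRel_adj]
        refine ⟨by simp, Or.inl (Or.inl ⟨i, x, q, rfl, rfl⟩)⟩
      have g1 : (⟨_, hq'⟩ : Node G) ∈ gadgetNodes G := Or.inl ⟨_, _, _, rfl⟩
      have g2 : (⟨_, hq⟩ : Node G) ∈ gadgetNodes G := Or.inl ⟨_, _, _, rfl⟩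
      exact ⟨T_adj hT g2 g1 hadj.symm, T_adj hT g1 g2 hadj⟩
  rw [key p hp, key q hq]

variable {G} in
theorem T_enode {T : Set (Node G)} (hT : IsPathsSolution G T) {i j : Fin κ} {x y : Fin n}
    {p q : ℕ}
    (hp : Valid G (PreNode.enode i j x y p)) (hq : Valid G (PreNode.enode i j x y q)) :
    (⟨_, hp⟩ : Node G) ∈ T ↔ (⟨_, hq⟩ : Node G) ∈ T := by
  have key : ∀ (q : ℕ) (hq : Valid G (PreNode.enode i j x y q)),
      (⟨_, hq⟩ : Node G) ∈ T ↔
        (⟨PreNode.enode i j x y 0,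
          ⟨hq.1, hq.2.1, Nat.lt_of_le_of_lt (Nat.zero_le q) hq.2.2⟩⟩ : Node G) ∈ T := by
    intro q
    induction q with
    | zero => intro hq; rfl
    | succ q ih =>
      intro hq
      have hq' : Valid G (PreNode.enode i j x y q) := ⟨hq.1, hq.2.1, Nat.lt_of_succ_lt hq.2.2⟩
      rw [← ih hq']
      have hadj : (H G).Adj ⟨_, hq'⟩ ⟨_, hq⟩ := by
        rw [H, SimpleGraph.fromRel_adj]
        refine ⟨by simp, Or.inl ?_⟩
        exact Or.inr (Or.inr (Or.inr (Or.inr (Or.inl ⟨i, j, x, y, q, rfl, rfl⟩))))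
      have g1 : (⟨_, hq'⟩ : Node G) ∈ gadgetNodes G := Or.inr ⟨_, _, _, _, _, rfl⟩
      have g2 : (⟨_, hq⟩ : Node G) ∈ gadgetNodes G := Or.inr ⟨_, _, _, _, _, rfl⟩
      exact ⟨T_adj hT g2 g1 hadj.symm, T_adj hT g1 g2 hadj⟩
  rw [key p hp, key q hq]

theorem finite_initialS : Finite ↥(initialS G) := by
  refine Finite.of_surjective
    (fun t : Fin κ × Fin n × Fin (n * (κ - 1)) =>
      (⟨⟨PreNode.vnode t.1 t.2.1 t.2.2, t.2.2.2⟩, ⟨_, _, _, rfl⟩⟩ : ↥(initialS G))) ?_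
  rintro ⟨⟨w, hw⟩, i, x, p, h⟩
  have h' : w = PreNode.vnode i x p := h
  subst h'
  exact ⟨(i, x, ⟨p, hw⟩), rfl⟩

/-- The token initially on `vnode i x p`. -/
def tok (i : Fin κ) (x : Fin n) (p : Fin (n * (κ - 1))) : ↥(initialS G) :=
  ⟨⟨PreNode.vnode i x p, p.2⟩, ⟨_, _, _, rfl⟩⟩

end PathsConstruction

open PathsConstruction in
/-- Properties of any transformation sequence of at most `2n(κ−1)κ` token
slides moving the initial configuration to a paths solution `T`:
(i) every token that moves performs exactly two token slides and its
intermediate vertex is a green connector node; (ii) for each edge-block, `T`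
contains all `2n` nodes of exactly one edge-gadget of that block; (iii) for
each vertex-block, exactly `n(κ−1)` tokens slide, all coming from exactly one
vertex-gadget of that block. -/
theorem paths_solution_sequence_structure {κ n : ℕ} (G : SimpleGraph (Fin κ × Fin n))
    (T : Set (Node G)) (hT : IsPathsSolution G T)
    (m : ℕ) (f : ℕ → ↥(initialS G) → Node G)
    (hm : m ≤ 2 * n * (κ - 1) * κ)
    (h0 : f 0 = fun a => Subtype.val a)
    (hstep : ∀ i : ℕ, i < m → TokenDiscovery.Step (H G) (f i) (f (i + 1)))
    (hinj : Function.Injective (f m)) (hrange : Set.range (f m) = T) :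
    -- (i)
    (∀ a : ↥(initialS G), ({i : ℕ | i < m ∧ f (i + 1) a ≠ f i a}).Nonempty →
        ∃ i₁ i₂ : ℕ, i₁ < i₂ ∧ {i : ℕ | i < m ∧ f (i + 1) a ≠ f i a} = {i₁, i₂} ∧
          ∃ c d s k, (f (i₁ + 1) a).1 = PreNode.conn c d s k) ∧
    -- (ii)
    (∀ i j : Fin κ, i < j → ∃ x y : Fin n, G.Adj (i, x) (j, y) ∧
        edgeGadgetNodes G i j x y ⊆ T ∧
        ∀ x' y' : Fin n, G.Adj (i, x') (j, y') → (x', y') ≠ (x, y) →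
          edgeGadgetNodes G i j x' y' ∩ T = ∅) ∧
    -- (iii)
    (∀ i : Fin κ, ∃ x : Fin n,
        (∀ a : ↥(initialS G), (∃ p, (a : Node G).1 = PreNode.vnode i x p) →
            ∃ s : ℕ, s < m ∧ f (s + 1) a ≠ f s a) ∧
        (∀ a : ↥(initialS G), ∀ x' : Fin n, x' ≠ x →
            (∃ p, (a : Node G).1 = PreNode.vnode i x' p) →
            ∀ s : ℕ, s < m → f (s + 1) a = f s a) ∧
        {a : ↥(initialS G) | (∃ p, (a : Node G).1 = PreNode.vnode i x p) ∧
            ∃ s : ℕ, s < m ∧ f (s + 1) a ≠ f s a}.ncard = n * (κ - 1)) := by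
  classical
  have hfin := finite_initialS G
  have := Fintype.ofFinite ↥(initialS G)
  set M : ↥(initialS G) → Finset ℕ :=
    fun a => (Finset.range m).filter (fun s => f (s + 1) a ≠ f s a) with hM
  have memM : ∀ a s, s ∈ M a ↔ s < m ∧ f (s + 1) a ≠ f s a := by
    intro a s; simp [hM]
  -- every step moves at most one token
  have hsum : ∑ a, (M a).card ≤ m := by
    have h1 : ∑ a, (M a).card
        = ∑ s ∈ Finset.range m, (Finset.univ.filter (fun a => f (s + 1) a ≠ f s a)).card := by
      simp only [hM, Finset.card_filter]
      exact Finset.sum_comm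
    rw [h1]
    calc _ ≤ ∑ s ∈ Finset.range m, 1 := by
          refine Finset.sum_le_sum fun s hs => ?_
          obtain ⟨a, -, hj⟩ := hstep s (Finset.mem_range.1 hs)
          refine Finset.card_le_one.2 ?_
          intro b hb c hc
          simp only [Finset.mem_filter, Finset.mem_univ, true_and] at hb hc
          have hb' : b = a := by by_contra h; exact hb (hj b h)
          have hc' : c = a := by by_contra h; exact hc (hj c h)
          rw [hb', hc']
      _ = m := by simp
  have hadj : ∀ a s, s ∈ M a → (H G).Adj (f s a) (f (s + 1) a) := by
    intro a s hs
    obtain ⟨h1, h2⟩ := (memM a s).1 hs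
    obtain ⟨b, hb, hj⟩ := hstep s h1
    have : a = b := by by_contra h; exact h2 (hj a h)
    rw [this]; exact hb
  have hconst : ∀ a p q, p ≤ q → q ≤ m → (∀ s, p ≤ s → s < q → s ∉ M a) → f q a = f p a := by
    intro a p q hpq hqm h
    refine const_between (fun s => f s a) p q hpq ?_
    intro s h1 h2
    by_contra h3
    exact h s h1 h2 ((memM a s).2 ⟨by omega, h3⟩)
  have hstart : ∀ a, f 0 a = a.1 := fun a => by rw [h0]
  -- tokens ending in edge gadgets
  set E : Finset ↥(initialS G) :=
    Finset.univ.filter (fun a => ∃ i j x y p, (f m a).1 = PreNode.enode i j x y p) with hE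
  have memE : ∀ a, a ∈ E ↔ ∃ i j x y p, (f m a).1 = PreNode.enode i j x y p := by
    intro a; simp [hE]
  have hE2 : ∀ a ∈ E, 2 ≤ (M a).card := by
    intro a ha
    obtain ⟨i, j, x, y, p, he⟩ := (memE a).1 ha
    obtain ⟨i', x', p', hv⟩ := a.2
    by_contra hlt
    have hc : (M a).card ≤ 1 := by omega
    rcases Nat.lt_or_ge (M a).card 1 with h | h
    · have hemp : M a = ∅ := Finset.card_eq_zero.1 (by omega)
      have := hconst a 0 m (Nat.zero_le _) le_rfl (by intro s _ _; rw [hemp]; simp)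
      rw [this, hstart, hv] at he
      cases he
    · obtain ⟨s, hs⟩ := Finset.card_eq_one.1 (le_antisymm hc h)
      have hsM : s ∈ M a := by rw [hs]; simp
      have hsm := ((memM a s).1 hsM).1
      have e1 := hconst a 0 s (Nat.zero_le _) hsm.le
        (by intro t _ h2; rw [hs, Finset.mem_singleton]; omega)
      have e2 := hconst a (s + 1) m hsm le_rfl
        (by intro t h1 h2; rw [hs, Finset.mem_singleton]; omega)
      have hA := hadj a s hsM
      rw [e1, hstart] at hA
      rw [e2] at he
      exact not_adj_vnode_enode G hv he hA
  -- chosen edge gadgets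
  have hch : ∀ i j : Fin κ, ∃ x y : Fin n, i < j → ∃ hA : G.Adj (i, x) (j, y),
      edgeGadgetNodes G i j x y ⊆ T := by
    intro i j
    by_cases hij : i < j
    · obtain ⟨⟨w, hw⟩, ⟨x, y, p, rfl⟩, hwT⟩ := hT.2.2.2.1 i j hij
      refine ⟨x, y, fun _ => ⟨hw.2.1, ?_⟩⟩
      rintro ⟨w', hw'⟩ ⟨q, rfl⟩
      exact (T_enode hT hw hw').1 hwT
    · obtain ⟨⟨w, hw⟩, ⟨x, p, rfl⟩, hwT⟩ := hT.2.2.1 i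
      exact ⟨x, x, fun h => absurd h hij⟩
  choose X Y hXY using hch
  have hpre : ∀ w : Node G, w ∈ T → ∃ a, f m a = w := by
    intro w hw; rw [← hrange] at hw; exact hw
  -- the injection from ordered pairs × Fin n
  set D := {t : Fin κ × Fin κ // t.1 ≠ t.2} × Fin n with hD
  have cardD : Fintype.card D = n * (κ - 1) * κ := by
    rw [Fintype.card_prod, Fintype.card_fin, Fintype.card_subtype]
    have : (Finset.univ.filter (fun t : Fin κ × Fin κ => t.1 ≠ t.2))
        = (Finset.univ : Finset (Fin κ)).offDiag := by
      ext t; simp [Finset.mem_offDiag]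
    rw [this, Finset.offDiag_card, Finset.card_univ, Fintype.card_fin]
    rw [show κ * κ - κ = (κ - 1) * κ by rw [Nat.sub_mul, one_mul]]
    ring
  have hDex : ∀ t : D, ∃ a ∈ E, (f m a).1 =
      if t.1.1.1 < t.1.1.2 then
        PreNode.enode t.1.1.1 t.1.1.2 (X t.1.1.1 t.1.1.2) (Y t.1.1.1 t.1.1.2) t.2
      else
        PreNode.enode t.1.1.2 t.1.1.1 (X t.1.1.2 t.1.1.1) (Y t.1.1.2 t.1.1.1) (t.2 + n) := by
    rintro ⟨⟨⟨i, j⟩, hij⟩, p⟩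
    simp only at hij ⊢
    split_ifs with hlt
    · obtain ⟨hA, hs⟩ := hXY i j hlt
      have hv : Valid G (PreNode.enode i j (X i j) (Y i j) p) := ⟨hlt, hA, by omega⟩
      obtain ⟨a, ha⟩ := hpre ⟨_, hv⟩ (hs ⟨p, rfl⟩)
      exact ⟨a, (memE a).2 ⟨_, _, _, _, _, congrArg Subtype.val ha⟩, congrArg Subtype.val ha⟩
    · have hlt' : j < i := lt_of_le_of_ne (not_lt.1 hlt) (Ne.symm hij)
      obtain ⟨hA, hs⟩ := hXY j i hlt'
      have hv : Valid G (PreNode.enode j i (X j i) (Y j i) (p + n)) := ⟨hlt', hA, by omega⟩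
      obtain ⟨a, ha⟩ := hpre ⟨_, hv⟩ (hs ⟨p + n, rfl⟩)
      exact ⟨a, (memE a).2 ⟨_, _, _, _, _, congrArg Subtype.val ha⟩, congrArg Subtype.val ha⟩
  choose φ hφE hφ using hDex
  have hφinj : Function.Injective φ := by
    intro t t' h
    have h1 := hφ t
    rw [h, hφ t'] at h1
    obtain ⟨⟨⟨i, j⟩, hij⟩, p⟩ := t
    obtain ⟨⟨⟨i', j'⟩, hij'⟩, p'⟩ := t'
    simp only at h1
    split_ifs at h1 with c1 c2 c2
    · simp only [PreNode.enode.injEq] at h1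
      obtain ⟨rfl, rfl, -, -, h5⟩ := h1
      have : p = p' := Fin.ext h5.symm
      rw [this]
    · simp only [PreNode.enode.injEq] at h1
      have := p.2; have := p'.2; omega
    · simp only [PreNode.enode.injEq] at h1
      have := p.2; have := p'.2; omega
    · simp only [PreNode.enode.injEq] at h1
      obtain ⟨rfl, rfl, -, -, h5⟩ := h1
      have : p = p' := Fin.ext (by omega)
      rw [this]
  have hle : n * (κ - 1) * κ ≤ E.card := by
    rw [← cardD, ← Finset.card_univ]
    exact Finset.card_le_card_of_injOn φ (fun t _ => hφE t) (hφinj.injOn)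
  have hsplit : ∑ a ∈ E, (M a).card + ∑ a ∈ Eᶜ, (M a).card = ∑ a, (M a).card :=
    Finset.sum_add_sum_compl E _
  have hsumE : E.card * 2 ≤ ∑ a ∈ E, (M a).card := by
    rw [← smul_eq_mul]; exact Finset.card_nsmul_le_sum E _ 2 hE2
  have hm' : m ≤ 2 * (n * (κ - 1) * κ) := by
    calc m ≤ _ := hm
      _ = _ := by ring
  have hEcard : E.card = n * (κ - 1) * κ := by omega
  have hcompl : ∑ a ∈ Eᶜ, (M a).card = 0 := by omega
  have hnot : ∀ a, a ∉ E → M a = ∅ := by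
    intro a ha
    exact Finset.card_eq_zero.1
      ((Finset.sum_eq_zero_iff.1 hcompl) a (Finset.mem_compl.2 ha))
  have hEeq : ∀ a ∈ E, (M a).card = 2 := by
    have h1 : ∑ a ∈ E, 2 = ∑ a ∈ E, (M a).card := by
      rw [Finset.sum_const, smul_eq_mul]; omega
    intro a ha
    exact (((Finset.sum_eq_sum_iff_of_le hE2).1 h1) a ha).symm
  have hφsurj : ∀ a ∈ E, ∃ t, φ t = a := by
    have : Finset.univ.image φ = E := by
      refine Finset.eq_of_subset_of_card_le ?_ ?_
      · intro a ha
        obtain ⟨t, -, rfl⟩ := Finset.mem_image.1 ha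
        exact hφE t
      · rw [Finset.card_image_of_injective _ hφinj, Finset.card_univ, cardD, hEcard]
    intro a ha
    rw [← this] at ha
    obtain ⟨t, -, h⟩ := Finset.mem_image.1 ha
    exact ⟨t, h⟩
  have hset : ∀ a, {i : ℕ | i < m ∧ f (i + 1) a ≠ f i a} = (M a : Set ℕ) := by
    intro a; ext s; simp only [Set.mem_setOf_eq, Finset.mem_coe, memM]
  refine ⟨?_, ?_, ?_⟩
  · intro a hne
    rw [hset] at hne ⊢
    have haE : a ∈ E := by
      by_contra h
      rw [hnot a h] at hne
      simp at hne
    have hpair : ∃ i₁ i₂ : ℕ, i₁ < i₂ ∧ M a = {i₁, i₂} := by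
      obtain ⟨u, v, huv, h⟩ := Finset.card_eq_two.1 (hEeq a haE)
      rcases lt_or_gt_of_ne huv with h' | h'
      · exact ⟨u, v, h', h⟩
      · exact ⟨v, u, h', by rw [h, Finset.pair_comm]⟩
    obtain ⟨i₁, i₂, hlt, hMa⟩ := hpair
    refine ⟨i₁, i₂, hlt, by rw [hMa]; simp, ?_⟩
    have m1 : i₁ ∈ M a := by rw [hMa]; simp
    have m2 : i₂ ∈ M a := by rw [hMa]; simp
    have l2 := ((memM a i₂).1 m2).1
    have nm : ∀ t, t ≠ i₁ → t ≠ i₂ → t ∉ M a := by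
      intro t h1 h2; rw [hMa]; simp [h1, h2]
    have e1 := hconst a 0 i₁ (Nat.zero_le _) (by omega)
      (fun t _ h => nm t (by omega) (by omega))
    have e2 := hconst a (i₁ + 1) i₂ hlt (by omega) (fun t h h' => nm t (by omega) (by omega))
    have e3 := hconst a (i₂ + 1) m l2 le_rfl (fun t h h' => nm t (by omega) (by omega))
    obtain ⟨i, j, x, y, p, he⟩ := (memE a).1 haE
    obtain ⟨i', x', p', hv⟩ := a.2
    have A1 := hadj a i₁ m1
    have A2 := hadj a i₂ m2
    rw [e1, hstart] at A1
    rw [e2, ← e3] at A2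
    exact common_conn G hv he A1 A2
  · intro i j hij
    obtain ⟨hA, hs⟩ := hXY i j hij
    refine ⟨X i j, Y i j, hA, hs, ?_⟩
    intro x' y' _ hne
    rw [Set.eq_empty_iff_forall_notMem]
    rintro w ⟨⟨p, hw⟩, hwT⟩
    obtain ⟨a, ha⟩ := hpre w hwT
    have hv : (f m a).1 = PreNode.enode i j x' y' p := by rw [ha, hw]
    obtain ⟨t, rfl⟩ := hφsurj a ((memE a).2 ⟨_, _, _, _, _, hv⟩)
    rw [hφ t] at hv
    apply hne
    split_ifs at hv
    · simp only [PreNode.enode.injEq] at hv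
      obtain ⟨rfl, rfl, h3, h4, -⟩ := hv
      rw [h3, h4]
    · simp only [PreNode.enode.injEq] at hv
      obtain ⟨rfl, rfl, h3, h4, -⟩ := hv
      rw [h3, h4]
  · -- (iii)
    have hz : ∀ i : Fin κ, ∃ x : Fin n, ∀ p, tok G i x p ∈ E := by
      intro i
      obtain ⟨⟨w, hw⟩, ⟨x, p, rfl⟩, hwT⟩ := hT.2.2.1 i
      refine ⟨x, fun q => ?_⟩
      by_contra hq
      have hemp := hnot _ hq
      have h1 := hconst (tok G i x q) 0 m (Nat.zero_le _) le_rfl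
        (by intro s _ _; rw [hemp]; simp)
      rw [hstart] at h1
      have h2 : (tok G i x q).1 ∈ T := by
        rw [← hrange]; exact ⟨_, h1⟩
      exact hwT ((T_vnode hT (p := q) q.2 hw).1 h2)
    choose Z hZ using hz
    have hψinj : Function.Injective
        (fun t : Fin κ × Fin (n * (κ - 1)) => tok G t.1 (Z t.1) t.2) := by
      rintro ⟨i, p⟩ ⟨i', p'⟩ h
      have h1 := congrArg (fun a => a.1.1) h
      simp only [tok, PreNode.vnode.injEq] at h1
      exact Prod.ext h1.1 (Fin.ext h1.2.2)
    have himg : Finset.univ.image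
        (fun t : Fin κ × Fin (n * (κ - 1)) => tok G t.1 (Z t.1) t.2) = E := by
      refine Finset.eq_of_subset_of_card_le ?_ ?_
      · intro a ha
        obtain ⟨t, -, rfl⟩ := Finset.mem_image.1 ha
        exact hZ _ _
      · rw [Finset.card_image_of_injective _ hψinj, Finset.card_univ, Fintype.card_prod,
          Fintype.card_fin, Fintype.card_fin, hEcard, mul_comm]
    have hmoves : ∀ a ∈ E, ∃ s : ℕ, s < m ∧ f (s + 1) a ≠ f s a := by
      intro a ha
      have : (M a).Nonempty := Finset.card_pos.1 (by rw [hEeq a ha]; norm_num)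
      obtain ⟨s, hs⟩ := this
      exact ⟨s, (memM a s).1 hs⟩
    have htok : ∀ i x (a : ↥(initialS G)), (∃ p, (a : Node G).1 = PreNode.vnode i x p) →
        ∃ p, a = tok G i x p := by
      rintro i x ⟨⟨w, hw⟩, h⟩ ⟨p, hp⟩
      simp only at hp
      subst hp
      exact ⟨⟨p, hw⟩, rfl⟩
    intro i
    refine ⟨Z i, ?_, ?_, ?_⟩
    · intro a ha
      obtain ⟨p, rfl⟩ := htok _ _ a ha
      exact hmoves _ (hZ i p)
    · intro a x' hx' ha s hs
      obtain ⟨p, rfl⟩ := htok _ _ a ha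
      by_contra hmv
      have hE' : tok G i x' p ∈ E := by
        by_contra h
        have h1 := (memM _ s).2 ⟨hs, hmv⟩
        rw [hnot _ h] at h1
        simp at h1
      rw [← himg] at hE'
      obtain ⟨⟨i', p'⟩, -, h⟩ := Finset.mem_image.1 hE'
      have h1 := congrArg (fun a => a.1.1) h
      simp only [tok, PreNode.vnode.injEq] at h1
      obtain ⟨rfl, h2, -⟩ := h1
      exact hx' h2.symm
    · have hset3 : {a : ↥(initialS G) | (∃ p, (a : Node G).1 = PreNode.vnode i (Z i) p) ∧
            ∃ s : ℕ, s < m ∧ f (s + 1) a ≠ f s a} = Set.range (tok G i (Z i)) := by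
        ext a
        constructor
        · rintro ⟨h, -⟩
          obtain ⟨p, rfl⟩ := htok _ _ a h
          exact ⟨p, rfl⟩
        · rintro ⟨p, rfl⟩
          exact ⟨⟨p, rfl⟩, hmoves _ (hZ i p)⟩
      have hti : Function.Injective (tok G i (Z i)) := by
        intro p p' h
        exact (Prod.ext_iff.1 (@hψinj (i, p) (i, p') h)).2
      rw [hset3, ← Set.image_univ, Set.ncard_image_of_injective _ hti, Set.ncard_univ,
        Nat.card_eq_fintype_card, Fintype.card_fin]
end
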